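/- Let q ∈ (0,1] and n ≥ 1. Then for the n-walker H–V walk with parameter q, E_{ρ∼IUD}[ p_rec(ρ) ] ≥ 1 − |2q−1|/(nq), where the expectation is over the initial label configuration ρ sampled from the IUD measure. -/

import Mathlib

/-!
The proof compares the potential `pot p = log (|p|² - 1)` of the walkers with weights attached to
the labels.

The function `pot` is superharmonic for simple random walk away from the origin
(`dh_add_dv_nonpos`).  The labels make the drift of `pot` anisotropic: from a vertex `x` labelled
`H` the next step is horizontal with probability `1 - q`, from a vertex labelled `V` with
probability `q`.  With `dd x` half the difference of the horizontal and vertical drifts of `pot`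
and `κ = (1 - 2q) / (2q)`, give a label `H` at `x` the weight `κ dd x` and a label `V` the weight
`-κ dd x`.  On average a visit to `x` changes the weight there by exactly what cancels the
anisotropic part of the drift (`drift_Phi`).  Hence the total potential plus the total weight of
the labels in a box of radius `R` is a supermartingale, up to a bounded gain at each visit to the
finite set `|p| < 3` and an error which stays bounded for times of order `R²`.

On the one hand the weights are bounded in total by `|κ|` times `mass R ≤ 4 log R + O(1)`
(`mass_le`), and their initial value has mean zero under IUD labels.  On the other hand
`x + y` is a simple random walk for each walker, whatever the labels do (`En_diag_le`), so that at a
time of order `R²` each of the `n` walkers has potential at least about `2 log R` with high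
probability.  Therefore the probability that `|p| < 3` is visited fewer than `m` times is at most
`4 |κ| / (2n) = |2q - 1| / (nq)`, first asymptotically (`prob_few_visits_le`) and then, as
`R → ∞`, exactly (`integral_fewVisits_le`).  The optimal constant needs the potential to be
evaluated at distance `N ^ j` with the box of radius `N ^ (j + 1)`, `N → ∞` first and `j → ∞`
second.

Letting `m → ∞` it remains to see that infinitely many visits to a finite set force recurrence
almost surely (`ae_recurrent`).  If a vertex `v` is left infinitely often, then almost surely so it
is towards each neighbour `u`: an exponential supermartingale, which takes into account the current
label of `v`, shows that `k` departures from `v` without `m` moves to `u` have a probability which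
decays exponentially in `k` (`prob_visits_le`).

Expectations of functions of finitely many steps are computed by the explicit iterated averages
`En`, which agree with any measure satisfying `IsLaw` (`measure_eq_En`).
-/

open MeasureTheory Filter
open scoped ENNReal

namespace HV

abbrev Z2 := ℤ × ℤ

/-- A label configuration: `true` stands for label `H`, `false` for label `V`. -/
abbrev Config := Z2 → Bool

/-- The state of the walk: positions of the `n` walkers and the label configuration. -/
abbrev State (n : ℕ) := (Fin n → Z2) × Config

/-- A trajectory: the sequence of positions of the active walker after each step. -/
abbrev Path := ℕ → Z2

/-- The walker that is active at the `(t+1)`-st step of the cyclic turn order. -/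
def active (n : ℕ) (hn : 0 < n) (t : ℕ) : Fin n := ⟨t % n, Nat.mod_lt t hn⟩

/-- Update the state when walker `i` moves to `y`: the label of the vertex the walker
leaves becomes `H` (`true`) if the move was horizontal, `V` (`false`) if vertical. -/
def apply' (n : ℕ) (s : State n) (i : Fin n) (y : Z2) : State n :=
  (Function.update s.1 i y,
    Function.update s.2 (s.1 i) (if y.2 = (s.1 i).2 then true else false))

/-- The one-step transition probability of the `H`–`V` walk with parameter `q`:
probability that, from state `s`, the active walker `i` moves to `y`.  The label of the
current location is first resampled (flipped with probability `q`), and then the walker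
takes a uniform horizontal step if the new label is `H`, a uniform vertical step if the
new label is `V`. -/
noncomputable def weight (q : ℝ) (n : ℕ) (s : State n) (i : Fin n) (y : Z2) : ℝ≥0∞ :=
  if y = s.1 i + (1, 0) ∨ y = s.1 i - (1, 0) then
    ENNReal.ofReal ((if s.2 (s.1 i) then 1 - q else q) / 2)
  else if y = s.1 i + (0, 1) ∨ y = s.1 i - (0, 1) then
    ENNReal.ofReal ((if s.2 (s.1 i) then q else 1 - q) / 2)
  else 0

/-- The deterministic reconstruction of the state of the `n`-walker `H`–`V` walk
(with all walkers starting at the origin and initial labels `ρ`) from a trajectory. -/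
def seq (n : ℕ) (hn : 0 < n) (ρ : Config) (y : Path) : ℕ → State n
  | 0 => (fun _ => (0, 0), ρ)
  | t + 1 => apply' n (seq n hn ρ y t) (active n hn t) (y t)

/-- `μ` is the law of the `n`-walker `H`–`V` walk with parameter `q` and initial labels `ρ`:
the finite-dimensional distributions are products of one-step transition probabilities. -/
def IsLaw (q : ℝ) (n : ℕ) (hn : 0 < n) (ρ : Config) (μ : Measure Path) : Prop :=
  ∀ (t : ℕ) (c : Path),
    μ {y : Path | ∀ s < t, y s = c s} =
      ∏ s ∈ Finset.range t, weight q n (seq n hn ρ c s) (active n hn s) (c s)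

/-- A trajectory is recurrent if every vertex is visited infinitely many times. -/
def Recurrent (n : ℕ) (hn : 0 < n) (ρ : Config) (y : Path) : Prop :=
  ∀ v : Z2, {t : ℕ | ∃ i, (seq n hn ρ y t).1 i = v}.Infinite

end HV

namespace HV

/-- `ν` is the IUD measure on label configurations: the labels at distinct vertices are
independent and uniform on `{H, V}`, i.e. every finite cylinder event has probability
`(1/2)^(number of constrained vertices)`. -/
def IsIUD (ν : Measure Config) : Prop :=
  ∀ (F : Finset Z2) (g : Z2 → Bool),
    ν {ρ : Config | ∀ x ∈ F, ρ x = g x} = (2 : ℝ≥0∞)⁻¹ ^ F.card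

end HV

namespace HV

/-! ### The logarithmic potential -/

/-- Squared Euclidean norm on `ℤ²`, as a real number. -/
noncomputable def rr (p : Z2) : ℝ := (p.1 : ℝ) ^ 2 + (p.2 : ℝ) ^ 2

/-- The discrete potential `log (|p|² - 1)`.  On the unit ball, where the argument is `-1` or `0`,
the convention `log (-1) = log 0 = 0` makes it vanish. -/
noncomputable def pot (p : Z2) : ℝ := Real.log (rr p - 1)

/-- Half the horizontal second difference of `pot`: the mean increment of `pot` under a uniform
horizontal step. -/
noncomputable def dh (p : Z2) : ℝ := (pot (p + (1, 0)) + pot (p - (1, 0))) / 2 - pot p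

/-- Half the vertical second difference of `pot`. -/
noncomputable def dv (p : Z2) : ℝ := (pot (p + (0, 1)) + pot (p - (0, 1))) / 2 - pot p

/-- The antisymmetric part of the drift, which the label weights have to compensate. -/
noncomputable def dd (p : Z2) : ℝ := (dh p - dv p) / 2

lemma rr_nonneg (p : Z2) : 0 ≤ rr p := by unfold rr; positivity

lemma rr_cast (p : Z2) : rr p = ((p.1 ^ 2 + p.2 ^ 2 : ℤ) : ℝ) := by simp [rr]

lemma pot_nonneg (p : Z2) : 0 ≤ pot p := by
  have h0 : 0 ≤ p.1 ^ 2 + p.2 ^ 2 := by positivity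
  have : pot p = Real.log (((p.1 ^ 2 + p.2 ^ 2 - 1 : ℤ)) : ℝ) := by
    simp [pot, rr]
  rw [this]
  rcases lt_trichotomy (p.1 ^ 2 + p.2 ^ 2 - 1) 0 with h | h | h
  · have : p.1 ^ 2 + p.2 ^ 2 - 1 = -1 := by omega
    rw [this]; simp
  · rw [h]; simp
  · apply Real.log_nonneg
    exact_mod_cast (by omega : 1 ≤ p.1 ^ 2 + p.2 ^ 2 - 1)

lemma pot_le_rr (p : Z2) : pot p ≤ rr p := by
  have h0 : 0 ≤ p.1 ^ 2 + p.2 ^ 2 := by positivity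
  by_cases h : 1 < rr p
  · have := Real.log_le_sub_one_of_pos (show 0 < rr p - 1 by linarith)
    unfold pot; linarith
  · have h1 : p.1 ^ 2 + p.2 ^ 2 ≤ 1 := by
      rw [rr_cast] at h; exact_mod_cast not_lt.mp h
    have : pot p = 0 := by
      have hz : pot p = Real.log (((p.1 ^ 2 + p.2 ^ 2 - 1 : ℤ)) : ℝ) := by simp [pot, rr]
      rw [hz]
      have : p.1 ^ 2 + p.2 ^ 2 - 1 = -1 ∨ p.1 ^ 2 + p.2 ^ 2 - 1 = 0 := by omega
      rcases this with h | h <;> rw [h] <;> simp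
    rw [this]; exact rr_nonneg p

lemma rr_add_right (p : Z2) : rr (p + (1, 0)) = rr p + 2 * p.1 + 1 := by
  simp [rr]; ring
lemma rr_sub_right (p : Z2) : rr (p - (1, 0)) = rr p - 2 * p.1 + 1 := by
  simp [rr]; ring
lemma rr_add_up (p : Z2) : rr (p + (0, 1)) = rr p + 2 * p.2 + 1 := by
  simp [rr]; ring
lemma rr_sub_up (p : Z2) : rr (p - (0, 1)) = rr p - 2 * p.2 + 1 := by
  simp [rr]; ring

lemma sq_gap {s x : ℝ} (hs : 9 ≤ s) (hx : x ^ 2 ≤ s) : 0 < s + 2 * x ∧ 0 < s - 2 * x := by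
  constructor <;> nlinarith

lemma dh_eq (p : Z2) (hp : 9 ≤ rr p) :
    dh p = Real.log (rr p ^ 2 - 4 * (p.1 : ℝ) ^ 2) / 2 - Real.log (rr p - 1) := by
  have hx : (p.1 : ℝ) ^ 2 ≤ rr p := by unfold rr; nlinarith [sq_nonneg (p.2 : ℝ)]
  obtain ⟨h1, h2⟩ := sq_gap hp hx
  have : rr p ^ 2 - 4 * (p.1 : ℝ) ^ 2 = (rr p + 2 * p.1) * (rr p - 2 * p.1) := by ring
  rw [this, Real.log_mul h1.ne' h2.ne']
  simp only [dh, pot, rr_add_right, rr_sub_right]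
  ring_nf

lemma dv_eq (p : Z2) (hp : 9 ≤ rr p) :
    dv p = Real.log (rr p ^ 2 - 4 * (p.2 : ℝ) ^ 2) / 2 - Real.log (rr p - 1) := by
  have hx : (p.2 : ℝ) ^ 2 ≤ rr p := by unfold rr; nlinarith [sq_nonneg (p.1 : ℝ)]
  obtain ⟨h1, h2⟩ := sq_gap hp hx
  have : rr p ^ 2 - 4 * (p.2 : ℝ) ^ 2 = (rr p + 2 * p.2) * (rr p - 2 * p.2) := by ring
  rw [this, Real.log_mul h1.ne' h2.ne']
  simp only [dv, pot, rr_add_up, rr_sub_up]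
  ring_nf

lemma disc_pos {s x : ℝ} (hs : 9 ≤ s) (hx : x ^ 2 ≤ s) : 0 < s ^ 2 - 4 * x ^ 2 := by nlinarith

/-- `pot` is superharmonic for simple random walk away from the origin.  This is where the shift
by `-1` inside the logarithm is used: the product of the four neighbouring arguments is
`s⁴ - 4s³ + 16x²y² ≤ (s(s-2))² ≤ (s-1)⁴` with `s = x² + y²`. -/
lemma dh_add_dv_nonpos (p : Z2) (hp : 9 ≤ rr p) : dh p + dv p ≤ 0 := by
  have hx : (p.1 : ℝ) ^ 2 ≤ rr p := by unfold rr; nlinarith [sq_nonneg (p.2 : ℝ)]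
  have hy : (p.2 : ℝ) ^ 2 ≤ rr p := by unfold rr; nlinarith [sq_nonneg (p.1 : ℝ)]
  have h1 := disc_pos hp hx
  have h2 := disc_pos hp hy
  rw [dh_eq p hp, dv_eq p hp]
  have key : Real.log ((rr p ^ 2 - 4 * (p.1 : ℝ) ^ 2) * (rr p ^ 2 - 4 * (p.2 : ℝ) ^ 2))
      ≤ Real.log ((rr p - 1) ^ 4) := by
    apply Real.log_le_log (mul_pos h1 h2)
    have e : rr p = (p.1 : ℝ) ^ 2 + (p.2 : ℝ) ^ 2 := rfl
    have e1 : (rr p ^ 2 - 4 * (p.1 : ℝ) ^ 2) * (rr p ^ 2 - 4 * (p.2 : ℝ) ^ 2)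
      = rr p ^ 4 - 4 * rr p ^ 2 * ((p.1 : ℝ) ^ 2 + (p.2 : ℝ) ^ 2)
        + 16 * (p.1 : ℝ) ^ 2 * (p.2 : ℝ) ^ 2 := by ring
    have e2 : 16 * (p.1 : ℝ) ^ 2 * (p.2 : ℝ) ^ 2 ≤ 4 * rr p ^ 2 := by
      rw [e]; nlinarith [sq_nonneg ((p.1 : ℝ) ^ 2 - (p.2 : ℝ) ^ 2)]
    rw [e1, ← e]
    nlinarith
  rw [Real.log_mul h1.ne' h2.ne', Real.log_pow] at key
  push_cast at key
  linarith

lemma log_disc_le {s x : ℝ} (hs : 9 ≤ s) (hx : x ^ 2 ≤ s) :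
    Real.log (s ^ 2 - 4 * x ^ 2) / 2 - Real.log (s - 1) ≤ 1 / (s - 1) := by
  have h1 : Real.log (s ^ 2 - 4 * x ^ 2) ≤ Real.log (s ^ 2) :=
    Real.log_le_log (disc_pos hs hx) (by nlinarith [sq_nonneg x])
  rw [Real.log_pow] at h1
  have h2 : Real.log (s / (s - 1)) ≤ s / (s - 1) - 1 :=
    Real.log_le_sub_one_of_pos (div_pos (by linarith) (by linarith))
  rw [Real.log_div (by linarith) (by linarith)] at h2
  have h3 : s / (s - 1) - 1 = 1 / (s - 1) := by
    have : s - 1 ≠ 0 := by linarith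
    field_simp; ring
  push_cast at h1
  linarith

lemma dh_le (p : Z2) (hp : 9 ≤ rr p) : dh p ≤ 1 / (rr p - 1) := by
  rw [dh_eq p hp]
  exact log_disc_le hp (by unfold rr; nlinarith [sq_nonneg (p.2 : ℝ)])

lemma dv_le (p : Z2) (hp : 9 ≤ rr p) : dv p ≤ 1 / (rr p - 1) := by
  rw [dv_eq p hp]
  exact log_disc_le hp (by unfold rr; nlinarith [sq_nonneg (p.1 : ℝ)])

lemma dh_le_near (p : Z2) (hp : rr p < 9) : dh p ≤ 16 := by
  have h1 := pot_le_rr (p + (1, 0))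
  have h2 := pot_le_rr (p - (1, 0))
  rw [rr_add_right] at h1
  rw [rr_sub_right] at h2
  have := pot_nonneg p
  unfold dh; linarith

lemma dv_le_near (p : Z2) (hp : rr p < 9) : dv p ≤ 16 := by
  have h1 := pot_le_rr (p + (0, 1))
  have h2 := pot_le_rr (p - (0, 1))
  rw [rr_add_up] at h1
  rw [rr_sub_up] at h2
  have := pot_nonneg p
  unfold dv; linarith

/-- One direction of `abs_dd_le`, from `log a ≤ a - 1`. -/
lemma log_sub_log_le_aux {s x y : ℝ} (hs : 9 ≤ s) (hx : x ^ 2 ≤ s) (hy : y ^ 2 ≤ s)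
    (hxy : x ^ 2 ≤ y ^ 2) :
    Real.log (s ^ 2 - 4 * x ^ 2) - Real.log (s ^ 2 - 4 * y ^ 2)
      ≤ 4 * (|x ^ 2 - y ^ 2| / (s * (s - 4))) := by
  have h1 := disc_pos hs hx
  have h2 := disc_pos hs hy
  rw [← Real.log_div h1.ne' h2.ne', abs_sub_comm, abs_of_nonneg (by linarith)]
  refine (Real.log_le_sub_one_of_pos (div_pos h1 h2)).trans ?_
  have : (s ^ 2 - 4 * x ^ 2) / (s ^ 2 - 4 * y ^ 2) - 1
      = 4 * ((y ^ 2 - x ^ 2) / (s ^ 2 - 4 * y ^ 2)) := by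
    field_simp; ring
  rw [this]
  have : (y ^ 2 - x ^ 2) / (s ^ 2 - 4 * y ^ 2) ≤ (y ^ 2 - x ^ 2) / (s * (s - 4)) :=
    div_le_div_of_nonneg_left (by linarith) (by nlinarith) (by nlinarith)
  linarith

/-- In polar coordinates the bound is `|cos 2θ| / (r² - 4)`, so `|dd|` is only borderline
non-summable. -/
lemma abs_dd_le (p : Z2) (hp : 9 ≤ rr p) :
    |dd p| ≤ |(p.1 : ℝ) ^ 2 - (p.2 : ℝ) ^ 2| / (rr p * (rr p - 4)) := by
  have hx : (p.1 : ℝ) ^ 2 ≤ rr p := by unfold rr; nlinarith [sq_nonneg (p.2 : ℝ)]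
  have hy : (p.2 : ℝ) ^ 2 ≤ rr p := by unfold rr; nlinarith [sq_nonneg (p.1 : ℝ)]
  have h1 := disc_pos hp hx
  have h2 := disc_pos hp hy
  unfold dd
  rw [dh_eq p hp, dv_eq p hp]
  rcases le_total ((p.1 : ℝ) ^ 2) ((p.2 : ℝ) ^ 2) with h | h
  · have := log_sub_log_le_aux hp hx hy h
    have h3 : Real.log (rr p ^ 2 - 4 * (p.2 : ℝ) ^ 2) ≤ Real.log (rr p ^ 2 - 4 * (p.1 : ℝ) ^ 2) :=
      Real.log_le_log h2 (by linarith)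
    rw [abs_le]; constructor <;> linarith
  · have := log_sub_log_le_aux hp hy hx h
    rw [abs_sub_comm] at this
    have h3 : Real.log (rr p ^ 2 - 4 * (p.1 : ℝ) ^ 2) ≤ Real.log (rr p ^ 2 - 4 * (p.2 : ℝ) ^ 2) :=
      Real.log_le_log h1 (by linarith)
    rw [abs_le]; constructor <;> linarith

/-! ### The total mass of the compensator -/

/-- The box of sup-norm radius `R`. -/
noncomputable def box (R : ℕ) : Finset Z2 := Finset.Icc (-(R : ℤ)) R ×ˢ Finset.Icc (-(R : ℤ)) R

/-- Total mass of the compensator `dd` on the box of radius `R`. -/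
noncomputable def mass (R : ℕ) : ℝ := ∑ p ∈ box R, |dd p|

/-- Telescoping bound along a side of the box, coming from
`∂/∂y (y / (x² + y²)) = (x² - y²) / (x² + y²)²`. -/
lemma side_sum (k : ℕ) (hk : 1 ≤ k) (j : ℕ) (hj : j ≤ k) :
    ∑ y ∈ Finset.range j, ((k : ℝ) ^ 2 - ((y + 1 : ℕ) : ℝ) ^ 2) /
      ((k : ℝ) ^ 2 + ((y + 1 : ℕ) : ℝ) ^ 2) ^ 2 ≤ (j : ℝ) / ((k : ℝ) ^ 2 + (j : ℝ) ^ 2) := by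
  induction j with
  | zero => simp
  | succ j ih =>
    rw [Finset.sum_range_succ]
    have := ih (by omega)
    have hk' : (0 : ℝ) < k := by exact_mod_cast hk
    have hj' : ((j : ℝ) + 1) ≤ k := by exact_mod_cast hj
    have hj0 : (0 : ℝ) ≤ j := by positivity
    have key : ((k : ℝ) ^ 2 - ((j + 1 : ℕ) : ℝ) ^ 2) / ((k : ℝ) ^ 2 + ((j + 1 : ℕ) : ℝ) ^ 2) ^ 2
        ≤ ((j + 1 : ℕ) : ℝ) / ((k : ℝ) ^ 2 + ((j + 1 : ℕ) : ℝ) ^ 2)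
          - (j : ℝ) / ((k : ℝ) ^ 2 + (j : ℝ) ^ 2) := by
      push_cast
      have hA : 0 < (k : ℝ) ^ 2 + ((j : ℝ) + 1) ^ 2 := by positivity
      have hB : 0 < (k : ℝ) ^ 2 + (j : ℝ) ^ 2 := by positivity
      have e : ((j : ℝ) + 1) / ((k : ℝ) ^ 2 + ((j : ℝ) + 1) ^ 2) - (j : ℝ) / ((k : ℝ) ^ 2 + (j : ℝ) ^ 2)
          = ((k : ℝ) ^ 2 - j * (j + 1)) /
            (((k : ℝ) ^ 2 + ((j : ℝ) + 1) ^ 2) * ((k : ℝ) ^ 2 + (j : ℝ) ^ 2)) := by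
        field_simp; ring
      rw [e]
      apply div_le_div₀
      · nlinarith
      · nlinarith
      · positivity
      · rw [sq ((k : ℝ) ^ 2 + ((j : ℝ) + 1) ^ 2)]
        apply mul_le_mul_of_nonneg_left _ hA.le
        nlinarith
    linarith

/-- The bound for `|dd|` on a side of the box of radius `k`. -/
noncomputable def sideBound (k : ℕ) (y : ℤ) : ℝ :=
  (1 + 8 / (k : ℝ) ^ 2) * (((k : ℝ) ^ 2 - (y : ℝ) ^ 2) / ((k : ℝ) ^ 2 + (y : ℝ) ^ 2) ^ 2)

lemma abs_dd_le_sideBound (k : ℕ) (hk : 3 ≤ k) (p : Z2) (a b : ℤ)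
    (hb : -(k : ℤ) ≤ b ∧ b ≤ k) (ha : a = k ∨ a = -(k : ℤ))
    (hp : p = (a, b) ∨ p = (b, a)) : |dd p| ≤ sideBound k b := by
  have hk' : (3 : ℝ) ≤ k := by exact_mod_cast hk
  have ha2 : (a : ℝ) ^ 2 = (k : ℝ) ^ 2 := by rcases ha with h | h <;> simp [h]
  have hb2 : (b : ℝ) ^ 2 ≤ (k : ℝ) ^ 2 := by
    have h1 : -(k : ℝ) ≤ b := by exact_mod_cast hb.1
    have h2 : (b : ℝ) ≤ k := by exact_mod_cast hb.2
    nlinarith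
  have hr : rr p = (k : ℝ) ^ 2 + (b : ℝ) ^ 2 := by
    rcases hp with h | h <;> simp only [h, rr, ha2]
    ring
  have hab : |(p.1 : ℝ) ^ 2 - (p.2 : ℝ) ^ 2| = (k : ℝ) ^ 2 - (b : ℝ) ^ 2 := by
    rcases hp with h | h <;> simp only [h, ha2]
    · rw [abs_of_nonneg (by linarith)]
    · rw [abs_sub_comm, abs_of_nonneg (by linarith)]
  have h9 : 9 ≤ rr p := by rw [hr]; nlinarith [sq_nonneg (b : ℝ)]
  refine (abs_dd_le p h9).trans ?_
  rw [hab, hr]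
  unfold sideBound
  set s := (k : ℝ) ^ 2 + (b : ℝ) ^ 2
  have hs : (k : ℝ) ^ 2 ≤ s := by simp only [s]; nlinarith [sq_nonneg (b : ℝ)]
  have hk9 : (9 : ℝ) ≤ (k : ℝ) ^ 2 := by nlinarith
  have hk0 : (0 : ℝ) < (k : ℝ) ^ 2 := by nlinarith
  have h4 : 1 / (s * (s - 4)) ≤ (1 + 8 / (k : ℝ) ^ 2) * (1 / s ^ 2) := by
    have h5 : 8 / s ≤ 8 / (k : ℝ) ^ 2 := div_le_div_of_nonneg_left (by norm_num) hk0 hs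
    have h6 : 1 / (s * (s - 4)) ≤ (1 + 8 / s) * (1 / s ^ 2) := by
      have : (1 + 8 / s) * (1 / s ^ 2) = (s + 8) / s ^ 3 := by
        have : s ≠ 0 := by linarith
        field_simp
      rw [this, div_le_div_iff₀ (by nlinarith) (by positivity)]
      have hss : (0 : ℝ) ≤ s * (s - 8) := by nlinarith
      nlinarith [mul_nonneg (show (0 : ℝ) ≤ s by linarith) (show (0 : ℝ) ≤ s - 8 by linarith)]
    refine h6.trans ?_
    apply mul_le_mul_of_nonneg_right _ (by positivity)
    linarith
  have := mul_le_mul_of_nonneg_left h4 (show (0 : ℝ) ≤ (k : ℝ) ^ 2 - (b : ℝ) ^ 2 by linarith)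
  calc ((k : ℝ) ^ 2 - (b : ℝ) ^ 2) / (s * (s - 4))
      = ((k : ℝ) ^ 2 - (b : ℝ) ^ 2) * (1 / (s * (s - 4))) := by ring
    _ ≤ _ := this
    _ = _ := by ring

lemma sum_Icc_symm (k : ℕ) (g : ℤ → ℝ) (hg : ∀ y, g (-y) = g y) :
    ∑ y ∈ Finset.Icc (-(k : ℤ)) k, g y = g 0 + 2 * ∑ y ∈ Finset.range k, g ((y + 1 : ℕ) : ℤ) := by
  induction k with
  | zero => simp
  | succ k ih =>
    have : Finset.Icc (-((k + 1 : ℕ) : ℤ)) ((k + 1 : ℕ) : ℤ)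
        = insert (-((k + 1 : ℕ) : ℤ)) (insert ((k + 1 : ℕ) : ℤ) (Finset.Icc (-(k : ℤ)) k)) := by
      ext y; simp only [Finset.mem_Icc, Finset.mem_insert]; omega
    rw [this, Finset.sum_insert, Finset.sum_insert, ih, Finset.sum_range_succ, hg]
    · ring
    · simp
    · simp only [Finset.mem_Icc, Finset.mem_insert]; omega

/-- The leading term is exactly `1/k`: by `side_sum` each half of the side contributes about
`1/(2k)`. -/
lemma sum_sideBound (k : ℕ) (hk : 3 ≤ k) :
    ∑ y ∈ Finset.Icc (-(k : ℤ)) k, sideBound k y ≤ 1 / (k : ℝ) + 17 / (k : ℝ) ^ 2 := by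
  have hk' : (3 : ℝ) ≤ k := by exact_mod_cast hk
  rw [sum_Icc_symm k (sideBound k) (by intro y; simp [sideBound])]
  have h1 := side_sum k (by omega) k le_rfl
  have h2 : ∑ y ∈ Finset.range k, sideBound k ((y + 1 : ℕ) : ℤ)
      ≤ (1 + 8 / (k : ℝ) ^ 2) * ((k : ℝ) / ((k : ℝ) ^ 2 + (k : ℝ) ^ 2)) := by
    simp only [sideBound, Int.cast_natCast]
    rw [← Finset.mul_sum]
    exact mul_le_mul_of_nonneg_left h1 (by positivity)
  have h3 : sideBound k 0 = (1 + 8 / (k : ℝ) ^ 2) * (1 / (k : ℝ) ^ 2) := by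
    have : (k : ℝ) ≠ 0 := by linarith
    simp only [sideBound, Int.cast_zero]
    field_simp
    ring
  rw [h3]
  have h4 : (1 + 8 / (k : ℝ) ^ 2) * (1 / (k : ℝ) ^ 2) +
      2 * ((1 + 8 / (k : ℝ) ^ 2) * ((k : ℝ) / ((k : ℝ) ^ 2 + (k : ℝ) ^ 2)))
      ≤ 1 / (k : ℝ) + 17 / (k : ℝ) ^ 2 := by
    have hk0 : (k : ℝ) ≠ 0 := by linarith
    have : (1 / (k : ℝ) + 17 / (k : ℝ) ^ 2) - ((1 + 8 / (k : ℝ) ^ 2) * (1 / (k : ℝ) ^ 2) +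
      2 * ((1 + 8 / (k : ℝ) ^ 2) * ((k : ℝ) / ((k : ℝ) ^ 2 + (k : ℝ) ^ 2))))
      = (16 * (k : ℝ) ^ 2 - 8 * k - 8) / (k : ℝ) ^ 4 := by
      field_simp; ring
    have h5 : 0 ≤ (16 * (k : ℝ) ^ 2 - 8 * k - 8) / (k : ℝ) ^ 4 :=
      div_nonneg (by nlinarith) (by positivity)
    linarith
  linarith

/-- Enlarging the box adds four sides, which may overlap at the corners. -/
lemma mass_succ (k : ℕ) (hk : 2 ≤ k) :
    mass (k + 1) ≤ mass k + 4 * (1 / ((k + 1 : ℕ) : ℝ) + 17 / ((k + 1 : ℕ) : ℝ) ^ 2) := by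
  have hS := sum_sideBound (k + 1) (by omega)
  set I := Finset.Icc (-((k + 1 : ℕ) : ℤ)) ((k + 1 : ℕ) : ℤ) with hI
  let A1 : Finset Z2 := I.image (fun y => (((k + 1 : ℕ) : ℤ), y))
  let A2 : Finset Z2 := I.image (fun y => (-((k + 1 : ℕ) : ℤ), y))
  let A3 : Finset Z2 := I.image (fun y => (y, ((k + 1 : ℕ) : ℤ)))
  let A4 : Finset Z2 := I.image (fun y => (y, -((k + 1 : ℕ) : ℤ)))
  have hsub : box (k + 1) ⊆ box k ∪ (A1 ∪ (A2 ∪ (A3 ∪ A4))) := by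
    rintro ⟨x, y⟩ h
    simp only [box, Finset.mem_product, Finset.mem_Icc, Finset.mem_union, Finset.mem_image,
      A1, A2, A3, A4, hI, Prod.mk.injEq] at h ⊢
    by_cases h1 : x = ((k + 1 : ℕ) : ℤ)
    · right; left; exact ⟨y, by omega, h1.symm, rfl⟩
    by_cases h2 : x = -((k + 1 : ℕ) : ℤ)
    · right; right; left; exact ⟨y, by omega, h2.symm, rfl⟩
    by_cases h3 : y = ((k + 1 : ℕ) : ℤ)
    · right; right; right; left; exact ⟨x, by omega, rfl, h3.symm⟩
    by_cases h4 : y = -((k + 1 : ℕ) : ℤ)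
    · right; right; right; right; exact ⟨x, by omega, rfl, h4.symm⟩
    left; omega
  have hun : ∀ (B C : Finset Z2), ∑ p ∈ B ∪ C, |dd p| ≤ ∑ p ∈ B, |dd p| + ∑ p ∈ C, |dd p| := by
    intro B C
    rw [← Finset.sum_union_inter]
    have : 0 ≤ ∑ p ∈ B ∩ C, |dd p| := Finset.sum_nonneg fun _ _ => abs_nonneg _
    linarith
  have him : ∀ (φ : ℤ → Z2), Function.Injective φ →
      (∀ y ∈ I, |dd (φ y)| ≤ sideBound (k + 1) y) →
      ∑ p ∈ I.image φ, |dd p| ≤ 1 / ((k + 1 : ℕ) : ℝ) + 17 / ((k + 1 : ℕ) : ℝ) ^ 2 := by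
    intro φ hφ hb
    rw [Finset.sum_image (fun a _ b _ h => hφ h)]
    exact (Finset.sum_le_sum hb).trans hS
  have b1 : ∑ p ∈ A1, |dd p| ≤ _ := him _ (fun a b h => by simpa using h) (fun y hy =>
    abs_dd_le_sideBound (k + 1) (by omega) _ _ y (by simpa [hI] using hy) (Or.inl rfl) (Or.inl rfl))
  have b2 : ∑ p ∈ A2, |dd p| ≤ _ := him _ (fun a b h => by simpa using h) (fun y hy =>
    abs_dd_le_sideBound (k + 1) (by omega) _ _ y (by simpa [hI] using hy) (Or.inr rfl) (Or.inl rfl))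
  have b3 : ∑ p ∈ A3, |dd p| ≤ _ := him _ (fun a b h => by simpa using h) (fun y hy =>
    abs_dd_le_sideBound (k + 1) (by omega) _ _ y (by simpa [hI] using hy) (Or.inl rfl) (Or.inr rfl))
  have b4 : ∑ p ∈ A4, |dd p| ≤ _ := him _ (fun a b h => by simpa using h) (fun y hy =>
    abs_dd_le_sideBound (k + 1) (by omega) _ _ y (by simpa [hI] using hy) (Or.inr rfl) (Or.inr rfl))
  have c0 : mass (k + 1) ≤ ∑ p ∈ box k ∪ (A1 ∪ (A2 ∪ (A3 ∪ A4))), |dd p| :=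
    Finset.sum_le_sum_of_subset_of_nonneg hsub fun _ _ _ => abs_nonneg _
  have c1 := hun (box k) (A1 ∪ (A2 ∪ (A3 ∪ A4)))
  have c2 := hun A1 (A2 ∪ (A3 ∪ A4))
  have c3 := hun A2 (A3 ∪ A4)
  have c4 := hun A3 A4
  have : mass k = ∑ p ∈ box k, |dd p| := rfl
  linarith

/-- The sharp logarithmic bound for the compensator.  The constant is `4 = ∫ |cos 2θ| dθ`, the integral
being over the circle; it is compared later with the growth `pot p ∼ 2 log |p|`. -/
lemma mass_le : ∃ C : ℝ, ∀ R : ℕ, 2 ≤ R → mass R ≤ 4 * Real.log R + C := by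
  refine ⟨mass 2 + 68, fun R hR => ?_⟩
  -- The term `-68 / R` absorbs the summable errors `4 * 17 / k ^ 2` in the induction.
  have : mass R ≤ 4 * Real.log R + (mass 2 + 68) - 68 / (R : ℝ) := by
    induction R, hR using Nat.le_induction with
    | base =>
      have := Real.log_nonneg (show (1 : ℝ) ≤ (2 : ℕ) by norm_num)
      push_cast at *
      linarith
    | succ k hk ih =>
      have h1 := mass_succ k hk
      have hk' : (2 : ℝ) ≤ k := by exact_mod_cast hk
      have h2 : 1 / ((k + 1 : ℕ) : ℝ) ≤ Real.log ((k + 1 : ℕ) : ℝ) - Real.log k := by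
        have h3 := Real.log_le_sub_one_of_pos (show 0 < (k : ℝ) / ((k + 1 : ℕ) : ℝ) by positivity)
        rw [Real.log_div (by linarith) (by positivity)] at h3
        have : (k : ℝ) / ((k + 1 : ℕ) : ℝ) - 1 = - (1 / ((k + 1 : ℕ) : ℝ)) := by
          push_cast; field_simp; ring
        linarith
      have h4 : 17 / ((k + 1 : ℕ) : ℝ) ^ 2 ≤ 17 / (k : ℝ) - 17 / ((k + 1 : ℕ) : ℝ) := by
        have : 17 / (k : ℝ) - 17 / ((k + 1 : ℕ) : ℝ) = 17 / (k * ((k + 1 : ℕ) : ℝ)) := by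
          push_cast; field_simp; ring
        rw [this]
        apply div_le_div_of_nonneg_left (by norm_num) (by positivity)
        push_cast; nlinarith
      have e1 : 68 / ((k + 1 : ℕ) : ℝ) = 4 * (17 / ((k + 1 : ℕ) : ℝ)) := by ring
      have e2 : 68 / (k : ℝ) = 4 * (17 / (k : ℝ)) := by ring
      rw [e1]; rw [e2] at ih
      linarith
  have h0 : 0 ≤ 68 / (R : ℝ) := by positivity
  linarith

end HV

namespace HV

/-! ### Anticoncentration of simple random walk on the integers -/

/-- `srw φ k s` is the expectation of `φ` after `k` steps of simple random walk on `ℤ`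
started at `s`. -/
noncomputable def srw (φ : ℤ → ℝ) : ℕ → ℤ → ℝ
  | 0, s => φ s
  | k + 1, s => (srw φ k (s + 1) + srw φ k (s - 1)) / 2

lemma srw_eq (φ : ℤ → ℝ) (k : ℕ) (s : ℤ) :
    srw φ k s = (∑ j ∈ Finset.range (k + 1), (k.choose j : ℝ) * φ (s + 2 * j - k)) / 2 ^ k := by
  induction k generalizing s with
  | zero => simp [srw]
  | succ k ih =>
    rw [srw, ih, ih, ← add_div, div_div, ← pow_succ]
    congr 1
    rw [Finset.sum_range_succ' _ (k + 1)]
    simp only [Nat.choose_succ_succ, Nat.cast_add, add_mul, Finset.sum_add_distrib]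
    rw [add_assoc]
    congr 1
    · apply Finset.sum_congr rfl; intro j _; congr 2; push_cast; ring
    · rw [Finset.sum_range_succ' _ k, Finset.sum_range_succ _ k]
      simp only [Nat.choose_succ_self]
      push_cast
      rw [zero_mul]
      congr 1
      · rw [add_zero]
        apply Finset.sum_congr rfl; intro j _; congr 2; ring
      · simp only [Nat.choose_zero_right]; congr 2; ring

/-- Equivalent to `centralBinom m ≤ 4 ^ m / √(2 m + 1)`. -/
lemma centralBinom_sq_le (m : ℕ) : m.centralBinom ^ 2 * (2 * m + 1) ≤ 16 ^ m := by
  induction m with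
  | zero => simp
  | succ m ih =>
    have h := Nat.succ_mul_centralBinom_succ m
    have h2 : ((m + 1) * (m + 1).centralBinom) ^ 2 * (2 * (m + 1) + 1)
        ≤ (m + 1) ^ 2 * 16 ^ (m + 1) := by
      rw [h]
      calc (2 * (2 * m + 1) * m.centralBinom) ^ 2 * (2 * (m + 1) + 1)
          = (m.centralBinom ^ 2 * (2 * m + 1)) * (4 * ((2 * m + 1) * (2 * m + 3))) := by ring
        _ ≤ 16 ^ m * (16 * (m + 1) ^ 2) := Nat.mul_le_mul ih (by nlinarith)
        _ = _ := by ring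
    have h3 : (m + 1) ^ 2 * ((m + 1).centralBinom ^ 2 * (2 * (m + 1) + 1))
        ≤ (m + 1) ^ 2 * 16 ^ (m + 1) := by
      calc _ = ((m + 1) * (m + 1).centralBinom) ^ 2 * (2 * (m + 1) + 1) := by ring
        _ ≤ _ := h2
    exact Nat.le_of_mul_le_mul_left h3 (by positivity)

/-- Anti-concentration: after `2 L²` steps, simple random walk on `ℤ` is in `[-a, a]` with
probability at most `(2a+1)/L`. -/
lemma srw_anticonc (L : ℕ) (hL : 1 ≤ L) (a : ℕ) :
    srw (fun s => if |s| ≤ (a : ℤ) then 1 else 0) (2 * L ^ 2) 0 ≤ (2 * a + 1) / L := by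
  rw [srw_eq]
  set m := L ^ 2 with hm
  have hc : ((m.centralBinom : ℕ) : ℝ) ≤ 2 ^ (2 * m) / L := by
    rw [le_div_iff₀ (by exact_mod_cast hL)]
    have h1 : m.centralBinom * L ≤ 4 ^ m := by
      have h2 : (m.centralBinom * L) ^ 2 ≤ (4 ^ m) ^ 2 := by
        calc (m.centralBinom * L) ^ 2 = m.centralBinom ^ 2 * m := by rw [hm]; ring
          _ ≤ m.centralBinom ^ 2 * (2 * m + 1) := Nat.mul_le_mul_left _ (by omega)
          _ ≤ 16 ^ m := centralBinom_sq_le m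
          _ = (4 ^ m) ^ 2 := by rw [← pow_mul, mul_comm m 2, pow_mul]; norm_num
      exact (Nat.pow_le_pow_iff_left (by norm_num)).mp h2
    rw [pow_mul]
    norm_num
    exact_mod_cast h1
  have h1 : ∑ j ∈ Finset.range (2 * m + 1), ((2 * m).choose j : ℝ) *
      (if |(0 : ℤ) + 2 * j - (2 * m : ℕ)| ≤ (a : ℤ) then (1 : ℝ) else 0)
      ≤ (2 * a + 1) * m.centralBinom := by
    simp only [mul_ite, mul_one, mul_zero]
    rw [← Finset.sum_filter]
    calc _ ≤ ∑ j ∈ Finset.range (2 * m + 1) with |(0 : ℤ) + 2 * ((j : ℕ) : ℤ) - (2 * m : ℕ)| ≤ (a : ℤ),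
          (m.centralBinom : ℝ) := by
          apply Finset.sum_le_sum
          intro j _
          exact_mod_cast Nat.choose_le_centralBinom j m
      _ ≤ _ := by
          rw [Finset.sum_const, nsmul_eq_mul]
          apply mul_le_mul_of_nonneg_right _ (by positivity)
          have : Finset.card {j ∈ Finset.range (2 * m + 1) |
              |(0 : ℤ) + 2 * ((j : ℕ) : ℤ) - (2 * m : ℕ)| ≤ (a : ℤ)} ≤ 2 * a + 1 := by
            calc _ ≤ (Finset.Icc (m - a) (m + a)).card := by
                  apply Finset.card_le_card
                  intro j hj
                  simp only [Finset.mem_filter, Finset.mem_Icc, abs_le] at hj ⊢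
                  push_cast at hj
                  omega
              _ ≤ _ := by rw [Nat.card_Icc]; omega
          exact_mod_cast this
  rw [div_le_div_iff₀ (by positivity) (by exact_mod_cast hL)]
  calc _ ≤ (2 * (a : ℝ) + 1) * m.centralBinom * L := by
        apply mul_le_mul_of_nonneg_right h1 (by positivity)
    _ ≤ (2 * (a : ℝ) + 1) * (2 ^ (2 * m) / L) * L := by gcongr
    _ = _ := by
      have : (L : ℝ) ≠ 0 := by positivity
      field_simp

end HV

namespace HV

/-! ### Conditional expectations along trajectories -/

/-- The position of the walker that is about to move at time `t`. -/
def loc (n : ℕ) (hn : 0 < n) (ρ : Config) (c : Path) (t : ℕ) : Z2 :=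
  (seq n hn ρ c t).1 (active n hn t)

lemma seq_congr (n : ℕ) (hn : 0 < n) (ρ : Config) {c c' : Path} (t : ℕ)
    (h : ∀ s < t, c s = c' s) : seq n hn ρ c t = seq n hn ρ c' t := by
  induction t with
  | zero => rfl
  | succ t ih => rw [seq, seq, ih fun s hs => h s (by omega), h t (by omega)]

lemma update_eq_of_lt (c : Path) (t : ℕ) (z : Z2) (s : ℕ) (hs : s < t) :
    Function.update c t z s = c s := Function.update_of_ne (by omega) _ _

lemma seq_update_of_le (n : ℕ) (hn : 0 < n) (ρ : Config) (c : Path) (t : ℕ) (z : Z2) (s : ℕ)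
    (hs : s ≤ t) : seq n hn ρ (Function.update c t z) s = seq n hn ρ c s :=
  seq_congr n hn ρ s fun r hr => update_eq_of_lt c t z r (by omega)

lemma seq_update (n : ℕ) (hn : 0 < n) (ρ : Config) (c : Path) (t : ℕ) (z : Z2) :
    seq n hn ρ (Function.update c t z) (t + 1)
      = apply' n (seq n hn ρ c t) (active n hn t) z := by
  rw [seq, seq_update_of_le n hn ρ c t z t le_rfl, Function.update_self]

/-- Along a given trajectory the positions do not depend on the labels. -/
lemma seq_fst_indep (n : ℕ) (hn : 0 < n) (ρ ρ' : Config) (c : Path) (t : ℕ) :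
    (seq n hn ρ c t).1 = (seq n hn ρ' c t).1 := by
  induction t with
  | zero => rfl
  | succ t ih => simp only [seq, apply', ih]

open Classical in
/-- The number of moves `p → z` with `Q p z` made before time `t`. -/
noncomputable def cnt (Q : Z2 → Z2 → Prop) (n : ℕ) (hn : 0 < n) (ρ : Config) (t : ℕ) (c : Path) :
    ℕ := ∑ s ∈ Finset.range t, if Q (loc n hn ρ c s) (c s) then 1 else 0

open Classical in
lemma cnt_succ (Q : Z2 → Z2 → Prop) (n : ℕ) (hn : 0 < n) (ρ : Config) (t : ℕ) (c : Path) :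
    cnt Q n hn ρ (t + 1) c = cnt Q n hn ρ t c + if Q (loc n hn ρ c t) (c t) then 1 else 0 :=
  Finset.sum_range_succ _ _

lemma cnt_congr (Q : Z2 → Z2 → Prop) (n : ℕ) (hn : 0 < n) (ρ : Config) (t : ℕ) {c c' : Path}
    (h : ∀ s < t, c s = c' s) : cnt Q n hn ρ t c = cnt Q n hn ρ t c' := by
  apply Finset.sum_congr rfl
  intro s hs
  rw [Finset.mem_range] at hs
  rw [h s hs, loc, loc, seq_congr n hn ρ s fun r hr => h r (by omega)]

open Classical in
lemma cnt_update (Q : Z2 → Z2 → Prop) (n : ℕ) (hn : 0 < n) (ρ : Config) (t : ℕ) (c : Path)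
    (z : Z2) : cnt Q n hn ρ (t + 1) (Function.update c t z)
      = cnt Q n hn ρ t c + if Q (loc n hn ρ c t) z then 1 else 0 := by
  rw [cnt_succ, cnt_congr Q n hn ρ t (fun s hs => update_eq_of_lt c t z s hs),
    Function.update_self, loc, seq_update_of_le n hn ρ c t z t le_rfl]
  rfl

/-- Expectation of `g` over the endpoint of a step from `p` that is horizontal with
probability `a`. -/
noncomputable def avg (p : Z2) (a : ℝ) (g : Z2 → ℝ) : ℝ :=
  a / 2 * (g (p + (1, 0)) + g (p - (1, 0))) + (1 - a) / 2 * (g (p + (0, 1)) + g (p - (0, 1)))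

/-- The probability that the next move is horizontal. -/
noncomputable def prH (q : ℝ) (n : ℕ) (hn : 0 < n) (ρ : Config) (c : Path) (t : ℕ) : ℝ :=
  if (seq n hn ρ c t).2 (loc n hn ρ c t) then 1 - q else q

/-- `En q n hn ρ k t c F` is the conditional expectation of `F` after `k` more steps, given that
the first `t` steps agree with `c`; `F` is evaluated at the trajectory which follows the sampled
steps up to time `t + k` and `c` afterwards. -/
noncomputable def En (q : ℝ) (n : ℕ) (hn : 0 < n) (ρ : Config) :
    ℕ → ℕ → Path → (Path → ℝ) → ℝ
  | 0, _, c, F => F c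
  | k + 1, t, c, F => avg (loc n hn ρ c t) (prH q n hn ρ c t)
      fun z => En q n hn ρ k (t + 1) (Function.update c t z) F

lemma prH_mem {q : ℝ} (hq : q ∈ Set.Ioc (0 : ℝ) 1) (n : ℕ) (hn : 0 < n) (ρ : Config) (c : Path)
    (t : ℕ) : prH q n hn ρ c t ∈ Set.Icc (0 : ℝ) 1 := by
  obtain ⟨h0, h1⟩ := hq
  unfold prH
  split_ifs <;> constructor <;> linarith

lemma avg_mono {p : Z2} {a : ℝ} (ha : a ∈ Set.Icc (0 : ℝ) 1) {g g' : Z2 → ℝ}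
    (h : ∀ z, g z ≤ g' z) : avg p a g ≤ avg p a g' := by
  obtain ⟨h0, h1⟩ := ha
  unfold avg
  have := h (p + (1, 0)); have := h (p - (1, 0)); have := h (p + (0, 1)); have := h (p - (0, 1))
  have h2 : 0 ≤ (1 - a) / 2 := by linarith
  gcongr

lemma En_mono {q : ℝ} (hq : q ∈ Set.Ioc (0 : ℝ) 1) (n : ℕ) (hn : 0 < n) (ρ : Config)
    {F G : Path → ℝ} (h : ∀ c, F c ≤ G c) (k t : ℕ) (c : Path) :
    En q n hn ρ k t c F ≤ En q n hn ρ k t c G := by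
  induction k generalizing t c with
  | zero => exact h c
  | succ k ih => exact avg_mono (prH_mem hq n hn ρ c t) fun z => ih _ _

lemma En_const (q : ℝ) (n : ℕ) (hn : 0 < n) (ρ : Config) (a : ℝ) (k t : ℕ) (c : Path) :
    En q n hn ρ k t c (fun _ => a) = a := by
  induction k generalizing t c with
  | zero => rfl
  | succ k ih => simp only [En, ih, avg]; ring

lemma En_add (q : ℝ) (n : ℕ) (hn : 0 < n) (ρ : Config) (F G : Path → ℝ) (k t : ℕ) (c : Path) :
    En q n hn ρ k t c (fun c => F c + G c) = En q n hn ρ k t c F + En q n hn ρ k t c G := by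
  induction k generalizing t c with
  | zero => rfl
  | succ k ih => simp only [En, ih, avg]; ring

lemma En_smul (q : ℝ) (n : ℕ) (hn : 0 < n) (ρ : Config) (a : ℝ) (F : Path → ℝ) (k t : ℕ)
    (c : Path) : En q n hn ρ k t c (fun c => a * F c) = a * En q n hn ρ k t c F := by
  induction k generalizing t c with
  | zero => rfl
  | succ k ih => simp only [En, ih, avg]; ring

/-- Optional stopping at a deterministic time, for supermartingales. -/
lemma En_le_of_super {q : ℝ} (hq : q ∈ Set.Ioc (0 : ℝ) 1) (n : ℕ) (hn : 0 < n) (ρ : Config)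
    (T : ℕ) (G : ℕ → Path → ℝ)
    (h : ∀ t < T, ∀ c, avg (loc n hn ρ c t) (prH q n hn ρ c t)
      (fun z => G (t + 1) (Function.update c t z)) ≤ G t c) (k t : ℕ) (c : Path)
    (hk : t + k = T) : En q n hn ρ k t c (G T) ≤ G t c := by
  induction k generalizing t c with
  | zero => simp at hk; subst hk; exact le_rfl
  | succ k ih =>
    exact (avg_mono (prH_mem hq n hn ρ c t) fun z => ih _ _ (by omega)).trans (h t (by omega) c)

/-! ### From conditional expectations to the law of the walk -/

/-- The cylinder of trajectories whose first `t` steps agree with `c`. -/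
def cyl (t : ℕ) (c : Path) : Set Path := {y | ∀ s < t, y s = c s}

/-- The event `A` is determined by the first `t` steps. -/
def PrefixDep (t : ℕ) (A : Set Path) : Prop :=
  ∀ y y' : Path, (∀ s < t, y s = y' s) → (y ∈ A ↔ y' ∈ A)

lemma PrefixDep.measurableSet {t : ℕ} {A : Set Path} (hA : PrefixDep t A) : MeasurableSet A := by
  let r : Path → (Fin t → Z2) := fun y s => y s
  have hr : Measurable r := measurable_pi_lambda _ fun s => measurable_pi_apply _
  have : A = r ⁻¹' (r '' A) := by
    ext y
    constructor
    · exact fun h => ⟨y, h, rfl⟩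
    · rintro ⟨y', hy', h⟩
      exact (hA y' y fun s hs => congrFun h ⟨s, hs⟩).1 hy'
  rw [this]
  exact hr (Set.to_countable _).measurableSet

lemma PrefixDep.compl {t : ℕ} {A : Set Path} (hA : PrefixDep t A) : PrefixDep t Aᶜ :=
  fun y y' h => not_congr (hA y y' h)

lemma PrefixDep.inter {t : ℕ} {A B : Set Path} (hA : PrefixDep t A) (hB : PrefixDep t B) :
    PrefixDep t (A ∩ B) :=
  fun y y' h => and_congr (hA y y' h) (hB y y' h)

lemma PrefixDep.mono {t t' : ℕ} (h : t ≤ t') {A : Set Path} (hA : PrefixDep t A) :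
    PrefixDep t' A :=
  fun y y' h' => hA y y' fun s hs => h' s (by omega)

/-- The four neighbours of a vertex. -/
def nbr (p : Z2) : Finset Z2 := {p + (1, 0), p - (1, 0), p + (0, 1), p - (0, 1)}

lemma sum_nbr_weight {q : ℝ} (hq : q ∈ Set.Ioc (0 : ℝ) 1) (n : ℕ) (hn : 0 < n) (ρ : Config)
    (c : Path) (t : ℕ) (g : Z2 → ℝ) :
    ∑ z ∈ nbr (loc n hn ρ c t), (weight q n (seq n hn ρ c t) (active n hn t) z).toReal * g z
      = avg (loc n hn ρ c t) (prH q n hn ρ c t) g := by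
  obtain ⟨h0, h1⟩ := hq
  have e : (seq n hn ρ c t).1 (active n hn t) = loc n hn ρ c t := rfl
  simp only [weight, e, prH]
  generalize loc n hn ρ c t = p
  obtain ⟨x, y⟩ := p
  have a1 : 0 ≤ (1 - q) / 2 := by linarith
  have a2 : 0 ≤ q / 2 := by linarith
  rw [nbr, Finset.sum_insert, Finset.sum_insert, Finset.sum_insert, Finset.sum_singleton]
  · cases (seq n hn ρ c t).2 (x, y) <;>
    simp [avg, ENNReal.toReal_ofReal, a1, a2, Prod.ext_iff] <;> ring
  all_goals simp [Prod.ext_iff]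
  all_goals omega

lemma cyl_update (t : ℕ) (c : Path) (z : Z2) :
    cyl (t + 1) (Function.update c t z) = {y | y t = z} ∩ cyl t c := by
  ext y
  simp only [cyl, Set.mem_inter_iff, Set.mem_ofPred_eq]
  constructor
  · intro h
    refine ⟨by simpa using h t (by omega), fun s hs => ?_⟩
    rw [h s (by omega), update_eq_of_lt c t z s hs]
  · rintro ⟨h1, h2⟩ s hs
    rcases Nat.lt_succ_iff_lt_or_eq.mp hs with h | h
    · rw [h2 s h, update_eq_of_lt c t z s h]
    · subst h; simpa using h1

lemma measure_cyl_update {q : ℝ} (n : ℕ) (hn : 0 < n) (ρ : Config) (μ : Measure Path)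
    (hμ : IsLaw q n hn ρ μ) (t : ℕ) (c : Path) (z : Z2) :
    μ (cyl (t + 1) (Function.update c t z))
      = μ (cyl t c) * weight q n (seq n hn ρ c t) (active n hn t) z := by
  have h1 := hμ (t + 1) (Function.update c t z)
  have h2 := hμ t c
  simp only [cyl]
  rw [h1, h2, Finset.prod_range_succ, Function.update_self, seq_update_of_le n hn ρ c t z t le_rfl]
  congr 1
  apply Finset.prod_congr rfl
  intro s hs
  rw [Finset.mem_range] at hs
  rw [seq_update_of_le n hn ρ c t z s hs.le, update_eq_of_lt c t z s hs]

/-- The law dominates the iterated averages on each event; applying this to the complement as well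
gives equality in `measure_eq_En`. -/
lemma En_mul_le {q : ℝ} (hq : q ∈ Set.Ioc (0 : ℝ) 1) (n : ℕ) (hn : 0 < n) (ρ : Config)
    (μ : Measure Path) [IsProbabilityMeasure μ] (hμ : IsLaw q n hn ρ μ) (A : Set Path)
    (k t : ℕ) (c : Path) (hA : PrefixDep (t + k) A) :
    μ.real (cyl t c) * En q n hn ρ k t c (A.indicator 1) ≤ μ.real (cyl t c ∩ A) := by
  induction k generalizing t c with
  | zero =>
    simp only [En]
    by_cases h : c ∈ A
    · have : cyl t c ∩ A = cyl t c :=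
        Set.inter_eq_left.mpr fun y hy => (hA y c fun s hs => hy s (by simpa using hs)).2 h
      rw [this]; simp [h]
    · simp [h]
  | succ k ih =>
    rw [En, ← sum_nbr_weight hq, Finset.mul_sum]
    calc _ ≤ ∑ z ∈ nbr (loc n hn ρ c t), μ.real ({y | y t = z} ∩ (cyl t c ∩ A)) := by
          apply Finset.sum_le_sum
          intro z _
          have h1 := ih (t + 1) (Function.update c t z) (by convert hA using 1; omega)
          rw [Measure.real, measure_cyl_update n hn ρ μ hμ, ENNReal.toReal_mul] at h1
          rw [cyl_update, Set.inter_assoc] at h1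
          rw [← mul_assoc]
          exact h1
      _ ≤ _ := by
          have hm : ∀ z : Z2, MeasurableSet {y : Path | y t = z} := fun z =>
            measurableSet_eq_fun (measurable_pi_apply t) measurable_const
          have e : ∀ z, μ.real ({y | y t = z} ∩ (cyl t c ∩ A))
              = (μ.restrict (cyl t c ∩ A)).real {y | y t = z} := fun z => by
            rw [Measure.real, Measure.real, Measure.restrict_apply (hm z)]
          simp only [e]
          rw [← measureReal_biUnion_finset]
          · calc _ ≤ (μ.restrict (cyl t c ∩ A)).real Set.univ := measureReal_mono (Set.subset_univ _)
              _ = _ := by simp [Measure.real]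
          · intro z _ z' _ hzz
            refine Set.disjoint_left.mpr fun y h h' => hzz ?_
            exact h.symm.trans h'
          · exact fun z _ => hm z

/-- For events determined by finitely many steps, the law of the walk is given by the iterated
one-step averages. -/
lemma measure_eq_En {q : ℝ} (hq : q ∈ Set.Ioc (0 : ℝ) 1) (n : ℕ) (hn : 0 < n) (ρ : Config)
    (μ : Measure Path) [IsProbabilityMeasure μ] (hμ : IsLaw q n hn ρ μ) (A : Set Path)
    (T : ℕ) (c : Path) (hA : PrefixDep T A) :
    μ.real A = En q n hn ρ T 0 c (A.indicator 1) := by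
  have hc : cyl 0 c = Set.univ := by simp [cyl]
  have h1 := En_mul_le hq n hn ρ μ hμ A T 0 c (by simpa using hA)
  have h2 := En_mul_le hq n hn ρ μ hμ Aᶜ T 0 c (by simpa using hA.compl)
  have h3 : En q n hn ρ T 0 c (A.indicator 1) + En q n hn ρ T 0 c (Aᶜ.indicator 1) = 1 := by
    rw [← En_add, ← En_const q n hn ρ 1 T 0 c]
    congr 1
    funext y
    by_cases h : y ∈ A <;> simp [h]
  have h4 := measureReal_add_measureReal_compl (μ := μ) hA.measurableSet
  simp only [hc, Set.univ_inter, probReal_univ, one_mul] at h1 h2 h4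
  linarith

end HV

namespace HV

/-! ### Potential of the walkers and weights of the labels -/

lemma sum_update {ι α : Type*} [DecidableEq ι] (S : Finset ι) (g : ι → α → ℝ) (v : ι → α) (i : ι)
    (b : α) : ∑ x ∈ S, g x (Function.update v i b x)
      = ∑ x ∈ S, g x (v x) + if i ∈ S then g i b - g i (v i) else 0 := by
  have : ∀ x, g x (Function.update v i b x) = g x (v x) + if x = i then g i b - g i (v i) else 0 := by
    intro x
    by_cases h : x = i
    · subst h; simp
    · simp [h]
  simp only [this, Finset.sum_add_distrib, Finset.sum_ite_eq']

/-- The diagonal coordinate of a single walker performs simple random walk on `ℤ` at the times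
when it is active, whatever the labels are: every move changes `x + y` by a fair sign. -/
lemma En_diag_le {q : ℝ} (hq : q ∈ Set.Ioc (0 : ℝ) 1) (n : ℕ) (hn : 0 < n) (ρ : Config)
    (φ : ℤ → ℝ) (K : ℕ) (i : Fin n) (c : Path) :
    En q n hn ρ (n * K) 0 c
      (fun c => φ (((seq n hn ρ c (n * K)).1 i).1 + ((seq n hn ρ c (n * K)).1 i).2))
      ≤ srw φ K 0 := by
  have hcount : Nat.count (fun s => s % n = i) (n * K) = K := by
    have := Nat.count_modEq_card (n * K) hn (i : ℕ)
    simp only [Nat.ModEq, Nat.mod_eq_of_lt i.2] at this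
    rw [this]
    simp [Nat.mul_div_cancel_left _ hn]
  let G : ℕ → Path → ℝ := fun t c =>
    srw φ (K - Nat.count (fun s => s % n = i) t)
      (((seq n hn ρ c t).1 i).1 + ((seq n hn ρ c t).1 i).2)
  have hT : G (n * K) = fun c =>
      φ (((seq n hn ρ c (n * K)).1 i).1 + ((seq n hn ρ c (n * K)).1 i).2) := by
    funext c; simp only [G, hcount, Nat.sub_self, srw]
  have h0 : G 0 c = srw φ K 0 := by simp [G, seq]
  rw [← hT, ← h0]
  apply En_le_of_super hq n hn ρ (n * K) G _ _ _ _ (by simp)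
  intro t ht c
  apply le_of_eq
  simp only [G, seq_update, apply']
  by_cases hi : active n hn t = i
  · have hmod : t % n = i := congrArg Fin.val hi
    have hle : Nat.count (fun s => s % n = i) (t + 1) ≤ K := by
      rw [← hcount]; exact Nat.count_monotone _ ht
    have hs : Nat.count (fun s => s % n = i) (t + 1) = Nat.count (fun s => s % n = i) t + 1 := by
      rw [Nat.count_succ, if_pos hmod]
    obtain ⟨k, hk⟩ : ∃ k, K - Nat.count (fun s => s % n = i) t = k + 1 :=
      ⟨K - Nat.count (fun s => s % n = i) (t + 1), by omega⟩
    have hk' : K - Nat.count (fun s => s % n = i) (t + 1) = k := by omega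
    rw [hk, hk', hi]
    simp only [avg, Function.update_self, srw, loc, hi, Prod.fst_add, Prod.snd_add, Prod.fst_sub,
      Prod.snd_sub, add_zero, sub_zero]
    generalize ((seq n hn ρ c t).1 i).1 = x
    generalize ((seq n hn ρ c t).1 i).2 = y
    rw [show x + 1 + y = x + y + 1 by ring, show x - 1 + y = x + y - 1 by ring,
      show x + (y + 1) = x + y + 1 by ring, show x + (y - 1) = x + y - 1 by ring]
    ring
  · have hmod : ¬ t % n = i := fun h => hi (Fin.ext h)
    rw [Nat.count_succ, if_neg hmod]
    simp only [avg, add_zero, Function.update_of_ne (Ne.symm hi)]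
    ring

/-- The weight of a label: `κ · dd x` for `H` and `-κ · dd x` for `V`. -/
noncomputable def lw (κ : ℝ) (x : Z2) (b : Bool) : ℝ := if b then κ * dd x else -(κ * dd x)

/-- The total potential of the walkers plus the total weight of the labels in a box. -/
noncomputable def Phi {n : ℕ} (κ : ℝ) (R : ℕ) (s : State n) : ℝ :=
  ∑ i, pot (s.1 i) + ∑ x ∈ box R, lw κ x (s.2 x)

lemma Phi_apply {n : ℕ} (κ : ℝ) (R : ℕ) (s : State n) (i : Fin n) (z : Z2) :
    Phi κ R (apply' n s i z) = Phi κ R s + (pot z - pot (s.1 i))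
      + if s.1 i ∈ box R then
          lw κ (s.1 i) (if z.2 = (s.1 i).2 then true else false) - lw κ (s.1 i) (s.2 (s.1 i))
        else 0 := by
  simp only [Phi, apply']
  rw [sum_update Finset.univ (fun _ p => pot p), sum_update (box R) (fun x b => lw κ x b)]
  simp only [Finset.mem_univ, if_true]
  ring

lemma lw_abs_le (κ : ℝ) (x : Z2) (b : Bool) : -(|κ| * |dd x|) ≤ lw κ x b := by
  rw [← abs_mul]
  unfold lw
  split_ifs
  · exact neg_abs_le _
  · exact neg_le_neg (le_abs_self _)

lemma sum_pot_le_Phi {n : ℕ} (κ : ℝ) (R : ℕ) (s : State n) :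
    ∑ i, pot (s.1 i) ≤ Phi κ R s + |κ| * mass R := by
  have : -(|κ| * mass R) ≤ ∑ x ∈ box R, lw κ x (s.2 x) := by
    rw [mass, Finset.mul_sum, ← Finset.sum_neg_distrib]
    exact Finset.sum_le_sum fun x _ => lw_abs_le κ x _
  unfold Phi; linarith

lemma rr_lt_of_notMem_box {R : ℕ} {p : Z2} (h : p ∉ box R) : (R : ℝ) ^ 2 ≤ rr p := by
  have : (R : ℤ) ^ 2 ≤ p.1 ^ 2 + p.2 ^ 2 := by
    simp only [box, Finset.mem_product, Finset.mem_Icc, not_and_or, not_le] at h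
    rcases h with (h | h) | (h | h) <;> nlinarith [sq_nonneg p.1, sq_nonneg p.2]
  rw [rr_cast]; exact_mod_cast this

open Classical in
/-- The drift of `Phi`.  Inside the box the label weights with `κ = (1-2q)/(2q)` cancel the
antisymmetric part of the drift of `pot`, and what remains is nonpositive away from the origin.
Outside the box the drift is of order `|p|⁻²`, hence at most `2|p|²/R⁴`. -/
lemma drift_Phi {q : ℝ} (hq : q ∈ Set.Ioc (0 : ℝ) 1) {n : ℕ} (R : ℕ) (hR : 1 ≤ R) (s : State n)
    (i : Fin n) :
    avg (s.1 i) (if s.2 (s.1 i) then 1 - q else q)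
      (fun z => Phi ((1 - 2 * q) / (2 * q)) R (apply' n s i z))
    ≤ Phi ((1 - 2 * q) / (2 * q)) R s + (if rr (s.1 i) < 9 then 16 else 0)
      + 2 / (R : ℝ) ^ 4 * rr (s.1 i) := by
  obtain ⟨h0, h1⟩ := hq
  set p := s.1 i with hp
  set κ := (1 - 2 * q) / (2 * q) with hκ
  have hκq : κ * q = (1 - 2 * q) / 2 := by rw [hκ]; field_simp
  have hR0 : (0 : ℝ) < R := by exact_mod_cast hR
  have hlast : 0 ≤ 2 / (R : ℝ) ^ 4 * rr p := mul_nonneg (by positivity) (rr_nonneg p)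
  simp only [Phi_apply, ← hp]
  have l1 : (p + (1, 0)).2 = p.2 := by simp
  have l2 : (p - (1, 0)).2 = p.2 := by simp
  have l3 : ¬ (p + (0, 1)).2 = p.2 := by simp
  have l4 : ¬ (p - (0, 1)).2 = p.2 := by simp
  have e1 : pot (p + (1, 0)) + pot (p - (1, 0)) = 2 * dh p + 2 * pot p := by unfold dh; ring
  have e2 : pot (p + (0, 1)) + pot (p - (0, 1)) = 2 * dv p + 2 * pot p := by unfold dv; ring
  set Φ := Phi κ R s
  by_cases hb : p ∈ box R
  · have main : avg p (if s.2 p then 1 - q else q) (fun z => Φ + (pot z - pot p)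
        + if p ∈ box R then lw κ p (if z.2 = p.2 then true else false) - lw κ p (s.2 p) else 0)
        = Φ + (dh p + dv p) / 2 := by
      simp only [hb, if_true, avg, l1, l2, l3, l4, if_false]
      cases s.2 p
      · simp only [lw, Bool.false_eq_true, if_false, if_true]
        have : dd p = (dh p - dv p) / 2 := rfl
        linear_combination (q / 2) * e1 + ((1 - q) / 2) * e2 + 2 * dd p * hκq
          + (1 - 2 * q) * this
      · simp only [lw, Bool.false_eq_true, if_false, if_true]
        have : dd p = (dh p - dv p) / 2 := rfl
        linear_combination ((1 - q) / 2) * e1 + (q / 2) * e2 - 2 * dd p * hκq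
          - (1 - 2 * q) * this
    rw [main]
    split_ifs with hn
    · have := dh_le_near p hn; have := dv_le_near p hn; linarith
    · have := dh_add_dv_nonpos p (not_lt.mp hn); linarith
  · have main : ∀ a : ℝ, avg p a (fun z => Φ + (pot z - pot p)
        + if p ∈ box R then lw κ p (if z.2 = p.2 then true else false) - lw κ p (s.2 p) else 0)
        = Φ + (a * dh p + (1 - a) * dv p) := by
      intro a
      simp only [hb, if_false, avg]
      linear_combination (a / 2) * e1 + ((1 - a) / 2) * e2
    rw [main]
    have ha : ∀ B : ℝ, dh p ≤ B → dv p ≤ B →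
        (if s.2 p then 1 - q else q) * dh p + (1 - if s.2 p then 1 - q else q) * dv p ≤ B := by
      intro B hh hv
      split_ifs <;> nlinarith
    by_cases hn : rr p < 9
    · have := ha 16 (dh_le_near p hn) (dv_le_near p hn)
      rw [if_pos hn]; linarith
    · rw [if_neg hn]
      push Not at hn
      have := ha _ (dh_le p hn) (dv_le p hn)
      have hR2 := rr_lt_of_notMem_box hb
      have h3 : 1 / (rr p - 1) ≤ 2 / (R : ℝ) ^ 4 * rr p := by
        have h4 : (R : ℝ) ^ 4 ≤ rr p ^ 2 := by nlinarith [sq_nonneg (R : ℝ)]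
        rw [div_mul_eq_mul_div, div_le_div_iff₀ (by linarith) (by positivity)]
        nlinarith
      linarith

lemma drift_rr {n : ℕ} (a : ℝ) (s : State n) (i : Fin n) :
    avg (s.1 i) a (fun z => ∑ j, rr ((apply' n s i z).1 j)) = ∑ j, rr (s.1 j) + 1 := by
  simp only [apply']
  simp only [sum_update Finset.univ (fun _ p => rr p), Finset.mem_univ, if_true, avg, rr_add_right,
    rr_sub_right, rr_add_up, rr_sub_up]
  ring

lemma avg_affine (p : Z2) (a α β γ : ℝ) (g g' : Z2 → ℝ) :
    avg p a (fun z => α * g z + β * g' z + γ) = α * avg p a g + β * avg p a g' + γ := by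
  unfold avg; ring

/-- Moves starting at distance less than `3` from the origin. -/
def nearMove (p _z : Z2) : Prop := rr p < 9

open Classical in
/-- The basic estimate: the expected potential of the walkers at time `T`, on the event that the
neighbourhood of the origin has been visited fewer than `m` times.  The supermartingale consists
of `Phi`, made nonnegative by the constant `M` and killed at the `m`-th visit; of `-16` for every
visit before that, paying for the drift near the origin; and of an upper bound for the expected
drift still to be collected outside the box, using that `∑ |X|²` grows by `1` per step on
average. -/
lemma En_pot_le {q : ℝ} (hq : q ∈ Set.Ioc (0 : ℝ) 1) (n : ℕ) (hn : 0 < n) (ρ : Config)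
    (R : ℕ) (hR : 1 ≤ R) (T m : ℕ) (c : Path) :
    En q n hn ρ T 0 c (fun c =>
      if cnt nearMove n hn ρ T c < m then ∑ i, pot ((seq n hn ρ c T).1 i) else 0)
    ≤ ∑ x ∈ box R, lw ((1 - 2 * q) / (2 * q)) x (ρ x) + |(1 - 2 * q) / (2 * q)| * mass R
      + 2 / (R : ℝ) ^ 4 * (T : ℝ) ^ 2 + 16 * m := by
  set κ := (1 - 2 * q) / (2 * q) with hκ
  set M := |κ| * mass R with hM
  have hR0 : (0 : ℝ) < R := by exact_mod_cast hR
  set ε := 2 / (R : ℝ) ^ 4 with hε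
  have hε0 : 0 ≤ ε := by positivity
  let G : ℕ → Path → ℝ := fun t c =>
    (if cnt nearMove n hn ρ t c < m then Phi κ R (seq n hn ρ c t) + M else 0)
      - 16 * (min (cnt nearMove n hn ρ t c) m : ℕ)
      + ε * (((T : ℝ) - t) * ∑ i, rr ((seq n hn ρ c t).1 i) + ((T : ℝ) - t) * T)
  have hP : ∀ s : State n, 0 ≤ Phi κ R s + M := fun s =>
    le_trans (Finset.sum_nonneg fun i _ => pot_nonneg _) (sum_pot_le_Phi κ R s)
  have hsup : ∀ t < T, ∀ c, avg (loc n hn ρ c t) (prH q n hn ρ c t)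
      (fun z => G (t + 1) (Function.update c t z)) ≤ G t c := by
    intro t ht c
    set s := seq n hn ρ c t with hs
    set i := active n hn t with hi
    have hloc : loc n hn ρ c t = s.1 i := rfl
    have hpr : prH q n hn ρ c t = if s.2 (s.1 i) then 1 - q else q := rfl
    set N := cnt nearMove n hn ρ t c with hN
    have hstep : ∀ z, cnt nearMove n hn ρ (t + 1) (Function.update c t z)
        = N + if rr (s.1 i) < 9 then 1 else 0 := fun z => by
      rw [cnt_update]; rfl
    have hsum : 0 ≤ ∑ j, rr (s.1 j) := Finset.sum_nonneg fun j _ => rr_nonneg _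
    have hTt : (t : ℝ) + 1 ≤ T := by exact_mod_cast ht
    have ht0 : (0 : ℝ) ≤ t := by positivity
    have hquad := drift_rr (prH q n hn ρ c t) s i
    by_cases hNm : N < m
    · have hpt : ∀ z, G (t + 1) (Function.update c t z) ≤
          1 * Phi κ R (apply' n s i z)
          + ε * ((T : ℝ) - t - 1) * ∑ j, rr ((apply' n s i z).1 j)
          + (M - 16 * (N + if rr (s.1 i) < 9 then 1 else 0 : ℕ) + ε * (((T : ℝ) - t - 1) * T)) := by
        intro z
        simp only [G, hstep, seq_update, ← hs, ← hi]
        have hmin : min (N + if rr (s.1 i) < 9 then 1 else 0) m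
            = N + if rr (s.1 i) < 9 then 1 else 0 := by
          apply min_eq_left; split_ifs <;> omega
        rw [hmin]
        have : (if (N + if rr (s.1 i) < 9 then 1 else 0) < m then
            Phi κ R (apply' n s i z) + M else 0) ≤ Phi κ R (apply' n s i z) + M := by
          split_ifs
          all_goals first | exact le_rfl | exact hP _
        push_cast at this ⊢
        linarith
      refine (avg_mono (prH_mem hq n hn ρ c t) hpt).trans ?_
      rw [avg_affine, hloc, hquad]
      have hd := drift_Phi hq R hR s i
      rw [← hpr, ← hκ, ← hε] at hd
      have hmin : min N m = N := min_eq_left hNm.le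
      simp only [G, ← hs, ← hN, if_pos hNm, hmin]
      have hr : rr (s.1 i) ≤ ∑ j, rr (s.1 j) :=
        Finset.single_le_sum (f := fun j => rr (s.1 j)) (fun j _ => rr_nonneg _) (Finset.mem_univ i)
      have h16 : (16 : ℝ) * ((N + if rr (s.1 i) < 9 then 1 else 0 : ℕ) : ℝ)
          = 16 * N + if rr (s.1 i) < 9 then 16 else 0 := by
        split_ifs <;> push_cast <;> ring
      rw [h16]
      have h5 : ε * rr (s.1 i) ≤ ε * ∑ j, rr (s.1 j) := mul_le_mul_of_nonneg_left hr hε0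
      have h6 : 0 ≤ ε * (1 + t) := by positivity
      nlinarith
    · have hpt : ∀ z, G (t + 1) (Function.update c t z) ≤
          0 * Phi κ R (apply' n s i z)
          + ε * ((T : ℝ) - t - 1) * ∑ j, rr ((apply' n s i z).1 j)
          + (- 16 * (m : ℕ) + ε * (((T : ℝ) - t - 1) * T)) := by
        intro z
        simp only [G, hstep, seq_update, ← hs, ← hi]
        have hmin : min (N + if rr (s.1 i) < 9 then 1 else 0) m = m := by
          apply min_eq_right; omega
        rw [hmin, if_neg (by omega)]
        push_cast
        linarith
      refine (avg_mono (prH_mem hq n hn ρ c t) hpt).trans ?_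
      rw [avg_affine, hloc, hquad]
      have hmin : min N m = m := min_eq_right (by omega)
      simp only [G, ← hs, ← hN, if_neg hNm, hmin]
      have h5 : 0 ≤ ε * ∑ j, rr (s.1 j) := mul_nonneg hε0 hsum
      have h6 : 0 ≤ ε * (1 + t) := by positivity
      nlinarith
  have hmain := En_le_of_super hq n hn ρ T G hsup T 0 c (by simp)
  have hG0 : G 0 c ≤ ∑ x ∈ box R, lw κ x (ρ x) + M + ε * (T : ℝ) ^ 2 := by
    have hz : pot ((0 : ℤ), (0 : ℤ)) = 0 := by simp [pot, rr]
    have hz' : rr ((0 : ℤ), (0 : ℤ)) = 0 := by simp [rr]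
    have hc0 : cnt nearMove n hn ρ 0 c = 0 := rfl
    simp only [G, seq, Phi, hz, hz', hc0, Finset.sum_const_zero]
    have := hP (seq n hn ρ c 0)
    simp only [seq, Phi, hz, Finset.sum_const_zero] at this
    split_ifs
    · simp; nlinarith
    · simp; nlinarith
  have hGT : En q n hn ρ T 0 c (fun c =>
      (if cnt nearMove n hn ρ T c < m then ∑ i, pot ((seq n hn ρ c T).1 i) else 0) + -(16 * m))
      ≤ En q n hn ρ T 0 c (G T) := by
    apply En_mono hq
    intro c
    have h1 : ((min (cnt nearMove n hn ρ T c) m : ℕ) : ℝ) ≤ m := by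
      exact_mod_cast min_le_right _ _
    have h2 := sum_pot_le_Phi κ R (seq n hn ρ c T)
    simp only [G]
    split_ifs <;> linarith
  rw [En_add, En_const] at hGT
  linarith

end HV

namespace HV

/-! ### Few visits near the origin are unlikely, for fixed labels -/

lemma En_sum {ι : Type*} (q : ℝ) (n : ℕ) (hn : 0 < n) (ρ : Config) (S : Finset ι)
    (F : ι → Path → ℝ) (k t : ℕ) (c : Path) :
    En q n hn ρ k t c (fun c => ∑ i ∈ S, F i c) = ∑ i ∈ S, En q n hn ρ k t c (F i) := by
  classical
  induction S using Finset.induction_on with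
  | empty => simp [En_const]
  | insert i S hi ih => simp only [Finset.sum_insert hi, En_add, ih]

/-- A vertex of small potential is close to the antidiagonal. -/
lemma abs_add_le_of_pot_lt (M : ℕ) (hM : 1 ≤ M) (p : Z2) (h : pot p < 2 * Real.log M) :
    |p.1 + p.2| ≤ ((2 * M : ℕ) : ℤ) := by
  have hM' : (1 : ℝ) ≤ M := by exact_mod_cast hM
  have h1 : rr p - 1 < (M : ℝ) ^ 2 := by
    rcases le_or_gt (rr p - 1) 0 with h0 | h0
    · nlinarith
    · rw [← Nat.cast_ofNat, ← Real.log_pow, pot] at h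
      exact (Real.log_lt_log_iff h0 (by positivity)).1 h
  have h2 : p.1 ^ 2 + p.2 ^ 2 - 1 < (M : ℤ) ^ 2 := by
    rw [rr_cast] at h1; exact_mod_cast h1
  apply abs_le_of_sq_le_sq
  · push_cast
    nlinarith [sq_nonneg (p.1 - p.2)]
  · positivity

lemma cnt_prefixDep (Q : Z2 → Z2 → Prop) (n : ℕ) (hn : 0 < n) (ρ : Config) (P : ℕ → Prop) (T : ℕ) :
    PrefixDep T {c | P (cnt Q n hn ρ T c)} := by
  intro y y' h
  simp only [Set.mem_ofPred_eq, cnt_congr Q n hn ρ T h]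

/-- At time `T = 2 n N^(2j+2)` every walker typically has potential at least `2 j log N`, because
its diagonal coordinate performs a simple random walk.  Comparing with `En_pot_le` on the box of
radius `N^(j+1)` bounds the probability that the neighbourhood of the origin has been visited
fewer than `m` times. -/
lemma prob_few_visits_le {q : ℝ} (hq : q ∈ Set.Ioc (0 : ℝ) 1) (n : ℕ) (hn : 0 < n) (ρ : Config)
    (μ : Measure Path) [IsProbabilityMeasure μ] (hμ : IsLaw q n hn ρ μ) (C : ℝ)
    (hC : ∀ R : ℕ, 2 ≤ R → mass R ≤ 4 * Real.log R + C) (j N m : ℕ) (hN : 2 ≤ N) :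
    n * (2 * j * Real.log N) *
        μ.real {c | cnt nearMove n hn ρ (n * (2 * (N ^ (j + 1)) ^ 2)) c < m}
    ≤ ∑ x ∈ box (N ^ (j + 1)), lw ((1 - 2 * q) / (2 * q)) x (ρ x)
      + |(1 - 2 * q) / (2 * q)| * (4 * (j + 1) * Real.log N + C) + 8 * n ^ 2 + 16 * m
      + n * (2 * j * Real.log N) * (5 / N) := by
  classical
  set κ := (1 - 2 * q) / (2 * q)
  set R := N ^ (j + 1) with hR
  set K := 2 * R ^ 2 with hK
  set T := n * K with hT
  set ℓ := 2 * j * Real.log N with hℓ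
  have hN0 : (0 : ℝ) < N := by positivity
  have hlog : 0 ≤ Real.log N := Real.log_natCast_nonneg N
  have hℓ0 : 0 ≤ ℓ := by positivity
  have hR2 : 2 ≤ R := hN.trans (Nat.le_self_pow (by omega) N)
  have hM : 1 ≤ N ^ j := Nat.one_le_pow _ _ (by omega)
  let c₀ : Path := fun _ => 0
  let φ : ℤ → ℝ := fun s => if |s| ≤ ((2 * N ^ j : ℕ) : ℤ) then 1 else 0
  rw [measure_eq_En hq n hn ρ μ hμ _ T c₀ (cnt_prefixDep nearMove n hn ρ (· < m) T), ← En_smul]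
  have hpt : ∀ c, n * ℓ * ({c | cnt nearMove n hn ρ T c < m}.indicator 1 c : ℝ)
      ≤ (if cnt nearMove n hn ρ T c < m then ∑ i, pot ((seq n hn ρ c T).1 i) else 0)
        + ℓ * ∑ i, φ (((seq n hn ρ c T).1 i).1 + ((seq n hn ρ c T).1 i).2) := by
    intro c
    have hφ : ∀ s, 0 ≤ φ s := fun s => by simp only [φ]; split_ifs <;> norm_num
    by_cases h : cnt nearMove n hn ρ T c < m
    · have h1 : (n : ℝ) * ℓ = ∑ _i : Fin n, ℓ := by simp
      simp only [Set.indicator, Set.mem_ofPred_eq, h, if_true, Pi.one_apply, mul_one]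
      rw [h1, Finset.mul_sum, ← Finset.sum_add_distrib]
      apply Finset.sum_le_sum
      intro i _
      generalize (seq n hn ρ c T).1 i = p
      have h2 := pot_nonneg p
      by_cases hp : pot p < ℓ
      · have := abs_add_le_of_pot_lt (N ^ j) hM p (by
          rw [Nat.cast_pow, Real.log_pow, ← mul_assoc]; exact hp)
        simp only [φ, if_pos this]; linarith
      · have := mul_nonneg hℓ0 (hφ (p.1 + p.2))
        linarith
    · simp only [Set.indicator, Set.mem_ofPred_eq, h, if_false, mul_zero, zero_add]
      exact mul_nonneg hℓ0 (Finset.sum_nonneg fun i _ => hφ _)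
  refine (En_mono hq n hn ρ hpt T 0 c₀).trans ?_
  rw [En_add, En_smul, En_sum]
  have h1 := En_pot_le hq n hn ρ R (by omega) T m c₀
  have h2 : ∑ i : Fin n, En q n hn ρ T 0 c₀
      (fun c => φ (((seq n hn ρ c T).1 i).1 + ((seq n hn ρ c T).1 i).2)) ≤ n * (5 / N) := by
    calc _ ≤ ∑ _i : Fin n, (5 / N : ℝ) := by
          apply Finset.sum_le_sum
          intro i _
          refine (En_diag_le hq n hn ρ φ K i c₀).trans ?_
          refine (srw_anticonc R (by omega) (2 * N ^ j)).trans ?_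
          have : (1 : ℝ) ≤ (N : ℝ) ^ j := by exact_mod_cast hM
          rw [hR, Nat.cast_pow, pow_succ, div_le_div_iff₀ (by positivity) hN0]
          push_cast
          nlinarith
      _ = _ := by simp
  have h3 : mass R ≤ 4 * (j + 1) * Real.log N + C := by
    have := hC R hR2
    rw [hR, Nat.cast_pow, Real.log_pow] at this
    push_cast at this
    linarith
  have h4 : 2 / (R : ℝ) ^ 4 * (T : ℝ) ^ 2 = 8 * n ^ 2 := by
    have : (R : ℝ) ≠ 0 := by positivity
    rw [hT, hK]; push_cast; field_simp; ring
  have h5 := mul_le_mul_of_nonneg_left h2 hℓ0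
  have h6 := mul_le_mul_of_nonneg_left h3 (abs_nonneg κ)
  rw [h4] at h1
  linarith

end HV

namespace HV

/-! ### Averaging over the initial labels -/

lemma loc_indep (n : ℕ) (hn : 0 < n) (ρ ρ' : Config) (c : Path) (t : ℕ) :
    loc n hn ρ c t = loc n hn ρ' c t := by
  rw [loc, loc, seq_fst_indep n hn ρ ρ']

lemma cnt_indep (Q : Z2 → Z2 → Prop) (n : ℕ) (hn : 0 < n) (ρ ρ' : Config) (t : ℕ) (c : Path) :
    cnt Q n hn ρ t c = cnt Q n hn ρ' t c := by
  unfold cnt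
  refine Finset.sum_congr rfl fun s _ => ?_
  rw [loc_indep n hn ρ ρ']

lemma measurable_label (n : ℕ) (hn : 0 < n) (c : Path) (t : ℕ) (x : Z2) :
    Measurable fun ρ : Config => (seq n hn ρ c t).2 x := by
  induction t with
  | zero => exact measurable_pi_apply x
  | succ t ih =>
    let ρ₀ : Config := fun _ => true
    simp only [seq, apply', seq_fst_indep n hn _ ρ₀]
    by_cases h : x = (seq n hn ρ₀ c t).1 (active n hn t)
    · subst h; simp only [Function.update_self]; exact measurable_const
    · simpa only [Function.update_of_ne h] using ih

lemma measurable_prH (q : ℝ) (n : ℕ) (hn : 0 < n) (c : Path) (t : ℕ) :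
    Measurable fun ρ : Config => prH q n hn ρ c t := by
  let ρ₀ : Config := fun _ => true
  simp only [prH, loc_indep n hn _ ρ₀]
  exact Measurable.ite (measurable_label n hn c t _ (MeasurableSet.singleton true))
    measurable_const measurable_const

lemma measurable_En (q : ℝ) (n : ℕ) (hn : 0 < n) (F : Path → ℝ) (k t : ℕ) (c : Path) :
    Measurable fun ρ : Config => En q n hn ρ k t c F := by
  induction k generalizing t c with
  | zero => exact measurable_const
  | succ k ih =>
    let ρ₀ : Config := fun _ => true
    simp only [En, avg, loc_indep n hn _ ρ₀]
    have h := measurable_prH q n hn c t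
    exact ((h.div_const 2).mul ((ih _ _).add (ih _ _))).add
      (((measurable_const.sub h).div_const 2).mul ((ih _ _).add (ih _ _)))

/-- The law of the walk depends measurably on the initial labels. -/
lemma measurable_law {q : ℝ} (hq : q ∈ Set.Ioc (0 : ℝ) 1) (n : ℕ) (hn : 0 < n)
    (μ : Config → Measure Path) [∀ ρ, IsProbabilityMeasure (μ ρ)]
    (hμ : ∀ ρ, IsLaw q n hn ρ (μ ρ)) : Measurable μ := by
  refine Measurable.measure_of_isPiSystem_of_isProbabilityMeasure
    (S := {A | ∃ t, PrefixDep t A}) ?_ ?_ ?_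
  · apply le_antisymm
    · refine iSup_le fun s => ?_
      rintro _ ⟨B, _, rfl⟩
      refine MeasurableSpace.measurableSet_generateFrom ⟨s + 1, fun y y' h => ?_⟩
      simp only [Set.mem_preimage]
      rw [h s (by omega)]
    · exact MeasurableSpace.generateFrom_le fun A ⟨t, hA⟩ => hA.measurableSet
  · rintro A ⟨t, hA⟩ B ⟨t', hB⟩ _
    exact ⟨max t t', (hA.mono (le_max_left _ _)).inter (hB.mono (le_max_right _ _))⟩
  · rintro A ⟨t, hA⟩
    have h : (fun ρ => μ ρ A)
        = fun ρ => ENNReal.ofReal (En q n hn ρ t 0 (fun _ => 0) (A.indicator 1)) := by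
      funext ρ
      rw [← measure_eq_En hq n hn ρ (μ ρ) (hμ ρ) A t _ hA, ofReal_measureReal]
    rw [h]
    exact (measurable_En q n hn _ t 0 _).ennreal_ofReal

lemma recurrent_indep (n : ℕ) (hn : 0 < n) (ρ ρ' : Config) (y : Path) :
    Recurrent n hn ρ y ↔ Recurrent n hn ρ' y := by
  simp only [Recurrent, seq_fst_indep n hn ρ ρ']

lemma measurableSet_recurrent (n : ℕ) (hn : 0 < n) (ρ : Config) :
    MeasurableSet {y | Recurrent n hn ρ y} := by
  have h : {y | Recurrent n hn ρ y}
      = ⋂ v : Z2, ⋂ k : ℕ, ⋃ t : ℕ, ⋃ _ : k < t, {y | ∃ i, (seq n hn ρ y t).1 i = v} := by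
    ext y
    simp only [Recurrent, Set.mem_iInter, Set.mem_iUnion, Set.mem_ofPred_eq]
    refine forall_congr' fun v => ?_
    rw [← Nat.frequently_atTop_iff_infinite, frequently_atTop']
    simp only [exists_prop, gt_iff_lt]
  rw [h]
  refine .iInter fun v => .iInter fun k => .iUnion fun t => .iUnion fun _ => ?_
  apply PrefixDep.measurableSet (t := t)
  intro y y' h
  simp only [Set.mem_ofPred_eq, seq_congr n hn ρ t h]

/-- Under the IUD measure the weight of each label has mean zero. -/
lemma integral_lw (ν : Measure Config) [IsProbabilityMeasure ν] (hν : IsIUD ν) (κ : ℝ) (x : Z2) :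
    Integrable (fun ρ : Config => lw κ x (ρ x)) ν ∧ ∫ ρ, lw κ x (ρ x) ∂ν = 0 := by
  have hm : ∀ b : Bool, MeasurableSet {ρ : Config | ρ x = b} := fun b =>
    measurableSet_eq_fun (measurable_pi_apply x) measurable_const
  have hb : ∀ b : Bool, ν.real {ρ : Config | ρ x = b} = 1 / 2 := fun b => by
    have := hν {x} fun _ => b
    simp only [Finset.mem_singleton, forall_eq, Finset.card_singleton, pow_one] at this
    rw [Measure.real, this]; simp
  have h : (fun ρ : Config => lw κ x (ρ x)) = fun ρ =>
      {ρ : Config | ρ x = true}.indicator (fun _ => κ * dd x) ρ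
      + {ρ : Config | ρ x = false}.indicator (fun _ => -(κ * dd x)) ρ := by
    funext ρ
    cases h : ρ x <;> simp [lw, h]
  have hi : ∀ (b : Bool) (a : ℝ),
      Integrable ({ρ : Config | ρ x = b}.indicator fun _ => a) ν := fun b a =>
    (integrable_const a).indicator (hm b)
  rw [h]
  refine ⟨(hi _ _).add (hi _ _), ?_⟩
  rw [integral_add (hi _ _) (hi _ _), integral_indicator_const _ (hm _),
    integral_indicator_const _ (hm _), hb, hb]
  simp

/-- The trajectories for which the neighbourhood of the origin is left fewer than `m` times.  The
labels passed to `cnt` are irrelevant, by `cnt_indep`. -/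
def fewVisits (n : ℕ) (hn : 0 < n) (m : ℕ) : Set Path :=
  {y | ∀ t, cnt nearMove n hn (fun _ => true) t y < m}

lemma measurableSet_fewVisits (n : ℕ) (hn : 0 < n) (m : ℕ) :
    MeasurableSet (fewVisits n hn m) := by
  have : fewVisits n hn m = ⋂ t, {y | cnt nearMove n hn (fun _ => true) t y < m} := by
    ext; simp [fewVisits]
  rw [this]
  exact .iInter fun t => (cnt_prefixDep nearMove n hn _ (· < m) t).measurableSet

/-- Averaging the estimate `prob_few_visits_le` over IUD labels and letting first `N` and then `j`
tend to infinity. -/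
lemma integral_fewVisits_le {q : ℝ} (hq : q ∈ Set.Ioc (0 : ℝ) 1) (n : ℕ) (hn : 0 < n)
    (ν : Measure Config) [IsProbabilityMeasure ν] (hν : IsIUD ν)
    (μ : Config → Measure Path) [∀ ρ, IsProbabilityMeasure (μ ρ)]
    (hμ : ∀ ρ, IsLaw q n hn ρ (μ ρ)) (m : ℕ) :
    ∫ ρ, (μ ρ).real (fewVisits n hn m) ∂ν ≤ |2 * q - 1| / (n * q) := by
  obtain ⟨C, hC⟩ := mass_le
  set κ := (1 - 2 * q) / (2 * q) with hκ
  set b := ∫ ρ, (μ ρ).real (fewVisits n hn m) ∂ν with hb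
  have hn0 : (0 : ℝ) < n := by exact_mod_cast hn
  have hmeas : Measurable fun ρ => (μ ρ).real (fewVisits n hn m) :=
    (((Measure.measurable_coe (measurableSet_fewVisits n hn m)).comp
      (measurable_law hq n hn μ hμ))).ennreal_toReal
  have hint : Integrable (fun ρ => (μ ρ).real (fewVisits n hn m)) ν := by
    refine (integrable_const (1 : ℝ)).mono' hmeas.aestronglyMeasurable (.of_forall fun ρ => ?_)
    rw [Real.norm_of_nonneg measureReal_nonneg]
    exact measureReal_le_one
  have key : ∀ j N : ℕ, 2 ≤ N → n * (2 * j * Real.log N) * b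
      ≤ |κ| * (4 * (j + 1) * Real.log N + C) + 8 * n ^ 2 + 16 * m
        + n * (2 * j * Real.log N) * (5 / N) := by
    intro j N hN
    have hlog : 0 ≤ Real.log N := Real.log_natCast_nonneg N
    have hpt : ∀ ρ, n * (2 * j * Real.log N) * (μ ρ).real (fewVisits n hn m)
        ≤ ∑ x ∈ box (N ^ (j + 1)), lw κ x (ρ x) + (|κ| * (4 * (j + 1) * Real.log N + C)
          + 8 * n ^ 2 + 16 * m + n * (2 * j * Real.log N) * (5 / N)) := by
      intro ρ
      have h1 := prob_few_visits_le hq n hn ρ (μ ρ) (hμ ρ) C hC j N m hN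
      have h2 : (μ ρ).real (fewVisits n hn m) ≤ (μ ρ).real
          {c | cnt nearMove n hn ρ (n * (2 * (N ^ (j + 1)) ^ 2)) c < m} :=
        measureReal_mono fun y hy => by
          rw [Set.mem_ofPred_eq, cnt_indep _ n hn ρ fun _ => true]; exact hy _
      have h3 := mul_le_mul_of_nonneg_left h2
        (show 0 ≤ n * (2 * j * Real.log N) by positivity)
      linarith
    have hs : Integrable (fun ρ : Config => ∑ x ∈ box (N ^ (j + 1)), lw κ x (ρ x)) ν :=
      integrable_finsetSum _ fun x _ => (integral_lw ν hν κ x).1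
    have := integral_mono (hint.const_mul _) (hs.add (integrable_const _)) hpt
    simp only [Pi.add_apply] at this
    rw [integral_const_mul, integral_add hs (integrable_const _),
      integral_finsetSum _ fun x _ => (integral_lw ν hν κ x).1, integral_const] at this
    simp only [(integral_lw ν hν κ _).2, Finset.sum_const_zero, probReal_univ, one_smul] at this
    linarith
  have hN : ∀ j : ℕ, n * (2 * j) * b ≤ |κ| * (4 * (j + 1)) := by
    intro j
    have l0 : Tendsto (fun N : ℕ => (Real.log N)⁻¹) atTop (nhds 0) :=
      (Real.tendsto_log_atTop.comp tendsto_natCast_atTop_atTop).inv_tendsto_atTop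
    have l1 : Tendsto (fun N : ℕ => 5 / (N : ℝ)) atTop (nhds 0) :=
      tendsto_const_div_atTop_nhds_zero_nat 5
    have l2 : Tendsto (fun N : ℕ => |κ| * (4 * (j + 1))
        + (|κ| * C + 8 * n ^ 2 + 16 * m) * (Real.log N)⁻¹ + n * (2 * j) * (5 / (N : ℝ)))
        atTop (nhds (|κ| * (4 * (j + 1)) + (|κ| * C + 8 * n ^ 2 + 16 * m) * 0
          + n * (2 * j) * 0)) :=
      (tendsto_const_nhds.add (l0.const_mul _)).add (l1.const_mul _)
    rw [mul_zero, mul_zero, add_zero, add_zero] at l2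
    refine ge_of_tendsto l2 (eventually_atTop.2 ⟨2, fun N hN => ?_⟩)
    have hlog : 0 < Real.log N := Real.log_pos (by exact_mod_cast hN)
    have := key j N hN
    rw [← mul_le_mul_iff_left₀ hlog]
    have e : (Real.log N)⁻¹ * Real.log N = 1 := inv_mul_cancel₀ hlog.ne'
    linear_combination this - (|κ| * C + 8 * n ^ 2 + 16 * m) * e
  have l0 : Tendsto (fun j : ℕ => 1 / ((j : ℝ) + 1)) atTop (nhds 0) :=
    tendsto_one_div_add_atTop_nhds_zero_nat
  -- The bound for `j + 1` in place of `j`, divided by `2 (j + 1)`.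
  have hj : (n : ℝ) * b ≤ |κ| * 2 := by
    have l1 : Tendsto (fun j : ℕ => |κ| * 2 + |κ| * 2 * (1 / ((j : ℝ) + 1))) atTop
        (nhds (|κ| * 2 + |κ| * 2 * 0)) := tendsto_const_nhds.add (l0.const_mul _)
    rw [mul_zero, add_zero] at l1
    refine ge_of_tendsto' l1 fun j => ?_
    have := hN (j + 1)
    push_cast at this
    have hj : (0 : ℝ) < j + 1 := by positivity
    have e : 1 / ((j : ℝ) + 1) * (j + 1) = 1 := by field_simp
    rw [← mul_le_mul_iff_left₀ hj]
    linear_combination this / 2 - |κ| * 2 * e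
  have h2 : |κ| * 2 = |2 * q - 1| / q := by
    rw [hκ, abs_div, abs_of_pos (show (0 : ℝ) < 2 * q by linarith [hq.1]), abs_sub_comm]
    have := hq.1.ne'
    field_simp
  rw [← div_div, div_right_comm, le_div_iff₀ hn0, ← h2]
  linarith

end HV

namespace HV

/-! ### From visits near the origin to recurrence -/

/-- The factor by which the supermartingale of `avg_gam_le` depends on the label `b` of `v`: it is
larger when `b` is the label under which a walker at `v` moves towards `u`. -/
noncomputable def gam (v u : Z2) (b : Bool) : ℝ := if b = decide (u.2 = v.2) then 3 / 2 else 1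

lemma gam_bounds (v u : Z2) (b : Bool) : 1 ≤ gam v u b ∧ gam v u b ≤ 3 / 2 := by
  unfold gam; split_ifs <;> norm_num

/-- One visit to `v` decreases the label factor, multiplied by `1/6` when the walker moves to the
neighbour `u`, by the factor `1 - q/8` on average. -/
lemma avg_gam_le {q : ℝ} (hq : q ∈ Set.Ioc (0 : ℝ) 1) (v u : Z2) (hu : u ∈ nbr v) (b : Bool) :
    avg v (if b then 1 - q else q) (fun z => (1 / 6 : ℝ) ^ (if z = u then 1 else 0)
      * gam v u (if z.2 = v.2 then true else false)) ≤ (1 - q / 8) * gam v u b := by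
  obtain ⟨h0, h1⟩ := hq
  obtain ⟨x, y⟩ := v
  have e1 : ¬ (1 : ℤ) = -1 := by norm_num
  have e2 : ¬ (-1 : ℤ) = 1 := by norm_num
  simp only [nbr, Finset.mem_insert, Finset.mem_singleton] at hu
  rcases hu with rfl | rfl | rfl | rfl <;> cases b <;>
    simp [avg, gam, Prod.ext_iff, sub_eq_add_neg, e1, e2] <;> nlinarith

lemma cnt_mono (Q : Z2 → Z2 → Prop) (n : ℕ) (hn : 0 < n) (ρ : Config) (c : Path) :
    Monotone fun t => cnt Q n hn ρ t c := by
  classical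
  refine monotone_nat_of_le_succ fun t => ?_
  rw [cnt_succ]; omega

/-- It is exponentially unlikely in `k` to leave `v` at least `k` times but to move from `v` to
its neighbour `u` fewer than `m` times. -/
lemma prob_visits_le {q : ℝ} (hq : q ∈ Set.Ioc (0 : ℝ) 1) (n : ℕ) (hn : 0 < n) (ρ : Config)
    (μ : Measure Path) [IsProbabilityMeasure μ] (hμ : IsLaw q n hn ρ μ) (v u : Z2)
    (hu : u ∈ nbr v) (k m T : ℕ) :
    μ.real {y | k ≤ cnt (fun p _ => p = v) n hn ρ T y ∧
      cnt (fun p z => p = v ∧ z = u) n hn ρ T y < m} ≤ 3 / 2 * 6 ^ m * (1 - q / 8) ^ k := by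
  classical
  set Q : Z2 → Z2 → Prop := fun p _ => p = v
  set Q' : Z2 → Z2 → Prop := fun p z => p = v ∧ z = u
  set A := {y | k ≤ cnt Q n hn ρ T y ∧ cnt Q' n hn ρ T y < m} with hA
  have hAT : PrefixDep T A :=
    (cnt_prefixDep Q n hn ρ (k ≤ ·) T).inter (cnt_prefixDep Q' n hn ρ (· < m) T)
  set l := 1 - q / 8 with hl
  have hl0 : 0 < l := by linarith [hq.2]
  have hl1 : l ≤ 1 := by linarith [hq.1]
  let c₀ : Path := fun _ => 0
  -- A supermartingale: a departure from `v` is compensated on average by `avg_gam_le`, and while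
  -- no walker leaves `v` nothing changes.
  let G : ℕ → Path → ℝ := fun t c =>
    l⁻¹ ^ cnt Q n hn ρ t c * (1 / 6) ^ cnt Q' n hn ρ t c * gam v u ((seq n hn ρ c t).2 v)
  have hsup : ∀ t < T, ∀ c, avg (loc n hn ρ c t) (prH q n hn ρ c t)
      (fun z => G (t + 1) (Function.update c t z)) ≤ G t c := by
    intro t _ c
    simp only [G, seq_update, cnt_update, apply', prH]
    change avg (loc n hn ρ c t) (if (seq n hn ρ c t).2 (loc n hn ρ c t) then 1 - q else q)
      (fun z => _ * gam v u (Function.update (seq n hn ρ c t).2 (loc n hn ρ c t)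
        (if z.2 = (loc n hn ρ c t).2 then true else false) v)) ≤ _
    by_cases h : loc n hn ρ c t = v
    · simp only [Q, Q', h, Function.update_self, if_true, true_and, pow_add, pow_one]
      have := avg_gam_le hq v u hu ((seq n hn ρ c t).2 v)
      have hpos : 0 ≤ l⁻¹ ^ cnt Q n hn ρ t c * l⁻¹ * (1 / 6 : ℝ) ^ cnt Q' n hn ρ t c := by
        positivity
      have h2 := mul_le_mul_of_nonneg_left this hpos
      calc _ = l⁻¹ ^ cnt Q n hn ρ t c * l⁻¹ * (1 / 6 : ℝ) ^ cnt Q' n hn ρ t c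
            * avg v (if (seq n hn ρ c t).2 v then 1 - q else q)
              (fun z => (1 / 6 : ℝ) ^ (if z = u then 1 else 0)
                * gam v u (if z.2 = v.2 then true else false)) := by
            simp only [avg]; ring
        _ ≤ _ := h2
        _ = l⁻¹ ^ cnt Q n hn ρ t c * (1 / 6 : ℝ) ^ cnt Q' n hn ρ t c
            * gam v u ((seq n hn ρ c t).2 v) := by
            rw [← hl]
            linear_combination (l⁻¹ ^ cnt Q n hn ρ t c * (1 / 6 : ℝ) ^ cnt Q' n hn ρ t c
              * gam v u ((seq n hn ρ c t).2 v)) * inv_mul_cancel₀ hl0.ne'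
    · have h' : v ≠ loc n hn ρ c t := fun e => h e.symm
      simp only [Q, Q', h, false_and, if_false, add_zero, Function.update_of_ne h', avg]
      apply le_of_eq; ring
  have hmain := En_le_of_super hq n hn ρ T G hsup T 0 c₀ (by simp)
  have hG0 : G 0 c₀ ≤ 3 / 2 := by
    simp only [G, cnt, Finset.range_zero, Finset.sum_empty, pow_zero, one_mul]
    exact (gam_bounds _ _ _).2
  have hpt : ∀ c, (l⁻¹ ^ k * (1 / 6) ^ m) * A.indicator 1 c ≤ G T c := by
    intro c
    have hg := (gam_bounds v u ((seq n hn ρ c T).2 v)).1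
    have hl2 : 1 ≤ l⁻¹ := (one_le_inv₀ hl0).2 hl1
    by_cases h : c ∈ A
    · simp only [Set.indicator_of_mem h, Pi.one_apply, G]
      have h1 : l⁻¹ ^ k ≤ l⁻¹ ^ cnt Q n hn ρ T c := pow_le_pow_right₀ hl2 h.1
      have h2 : (1 / 6 : ℝ) ^ m ≤ (1 / 6) ^ cnt Q' n hn ρ T c :=
        pow_le_pow_of_le_one (by norm_num) (by norm_num) h.2.le
      gcongr
    · simp only [Set.indicator_of_notMem h, mul_zero, G]
      positivity
  have h3 := En_mono hq n hn ρ hpt T 0 c₀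
  rw [En_smul, ← measure_eq_En hq n hn ρ μ hμ A T c₀ hAT] at h3
  have h4 : l⁻¹ ^ k * (1 / 6) ^ m * μ.real A ≤ 3 / 2 := h3.trans (hmain.trans hG0)
  have h5 := mul_le_mul_of_nonneg_left h4 (show 0 ≤ l ^ k * 6 ^ m by positivity)
  have e1 : l ^ k * l⁻¹ ^ k = 1 := by rw [← mul_pow, mul_inv_cancel₀ hl0.ne', one_pow]
  have e2 : (6 : ℝ) ^ m * (1 / 6) ^ m = 1 := by rw [← mul_pow]; norm_num
  calc μ.real A = (l ^ k * l⁻¹ ^ k) * ((6 : ℝ) ^ m * (1 / 6) ^ m) * μ.real A := by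
        rw [e1, e2]; ring
    _ = l ^ k * 6 ^ m * (l⁻¹ ^ k * (1 / 6) ^ m * μ.real A) := by ring
    _ ≤ l ^ k * 6 ^ m * (3 / 2) := h5
    _ = _ := by ring

/-- Almost surely, if `v` is left infinitely often then so it is towards its neighbour `u`. -/
lemma ae_moves {q : ℝ} (hq : q ∈ Set.Ioc (0 : ℝ) 1) (n : ℕ) (hn : 0 < n) (ρ : Config)
    (μ : Measure Path) [IsProbabilityMeasure μ] (hμ : IsLaw q n hn ρ μ) (v u : Z2)
    (hu : u ∈ nbr v) :
    ∀ᵐ y ∂μ, (∀ k, ∃ t, k ≤ cnt (fun p _ => p = v) n hn ρ t y) →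
      ∀ m, ∃ t, m ≤ cnt (fun p z => p = v ∧ z = u) n hn ρ t y := by
  set Q : Z2 → Z2 → Prop := fun p _ => p = v
  set Q' : Z2 → Z2 → Prop := fun p z => p = v ∧ z = u
  have hz : ∀ m, μ {y | (∀ k, ∃ t, k ≤ cnt Q n hn ρ t y) ∧ ∀ t, cnt Q' n hn ρ t y < m} = 0 := by
    intro m
    set E := {y | (∀ k, ∃ t, k ≤ cnt Q n hn ρ t y) ∧ ∀ t, cnt Q' n hn ρ t y < m}
    have hk : ∀ k : ℕ, μ E ≤ ENNReal.ofReal (3 / 2 * 6 ^ m * (1 - q / 8) ^ k) := by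
      intro k
      let B : ℕ → Set Path := fun t => {y | k ≤ cnt Q n hn ρ t y ∧ ∀ s, cnt Q' n hn ρ s y < m}
      have hB : Monotone B := fun t t' h y hy =>
        ⟨hy.1.trans (cnt_mono Q n hn ρ y h), hy.2⟩
      have hE : E ⊆ ⋃ t, B t := fun y hy => by
        obtain ⟨t, ht⟩ := hy.1 k
        exact Set.mem_iUnion.2 ⟨t, ht, hy.2⟩
      refine (measure_mono hE).trans ?_
      rw [hB.measure_iUnion]
      refine iSup_le fun t => ?_
      have h1 : μ (B t) ≤ μ {y | k ≤ cnt Q n hn ρ t y ∧ cnt Q' n hn ρ t y < m} :=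
        measure_mono fun y hy => ⟨hy.1, hy.2 t⟩
      refine h1.trans ?_
      rw [← ofReal_measureReal]
      exact ENNReal.ofReal_le_ofReal (prob_visits_le hq n hn ρ μ hμ v u hu k m t)
    have hlim : Tendsto (fun k : ℕ => ENNReal.ofReal (3 / 2 * 6 ^ m * (1 - q / 8) ^ k)) atTop
        (nhds 0) := by
      have := (tendsto_pow_atTop_nhds_zero_of_lt_one (r := 1 - q / 8) (by linarith [hq.2])
        (by linarith [hq.1])).const_mul (3 / 2 * (6 : ℝ) ^ m)
      rw [mul_zero] at this
      simpa using ENNReal.tendsto_ofReal this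
    exact le_antisymm (ge_of_tendsto' hlim hk) zero_le
  have hall : ∀ᵐ y ∂μ, ∀ m, ¬ ((∀ k, ∃ t, k ≤ cnt Q n hn ρ t y) ∧ ∀ t, cnt Q' n hn ρ t y < m) :=
    ae_all_iff.2 fun m => by
      rw [ae_iff]; simpa only [not_not] using hz m
  filter_upwards [hall] with y hy hv m
  by_contra! h
  exact hy m ⟨hv, h⟩

lemma cnt_unbounded_iff (Q : Z2 → Z2 → Prop) (n : ℕ) (hn : 0 < n) (ρ : Config) (c : Path) :
    (∀ k, ∃ t, k ≤ cnt Q n hn ρ t c) ↔ ∃ᶠ t in atTop, Q (loc n hn ρ c t) (c t) := by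
  classical
  constructor
  · intro h hev
    obtain ⟨a, ha⟩ := eventually_atTop.1 hev
    obtain ⟨t, ht⟩ := h (cnt Q n hn ρ a c + 1)
    have hconst : ∀ s, cnt Q n hn ρ (a + s) c = cnt Q n hn ρ a c := by
      intro s
      induction s with
      | zero => rfl
      | succ s ih => rw [← add_assoc, cnt_succ, ih, if_neg (ha _ (by omega))]; rfl
    have := cnt_mono Q n hn ρ c (show t ≤ a + t by omega)
    simp only [hconst] at this
    omega
  · intro h k
    induction k with
    | zero => exact ⟨0, Nat.zero_le _⟩
    | succ k ih =>
      obtain ⟨t, ht⟩ := ih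
      obtain ⟨s, hs, hQ⟩ := frequently_atTop.1 h t
      refine ⟨s + 1, ?_⟩
      have := cnt_mono Q n hn ρ c hs
      rw [cnt_succ, if_pos hQ]
      simp only at this
      omega

/-- A walker that has just moved stays where it is until its next turn, `n` steps later. -/
lemma loc_add (n : ℕ) (hn : 0 < n) (ρ : Config) (c : Path) (t : ℕ) :
    loc n hn ρ c (t + n) = c t := by
  have h : ∀ j < n, (seq n hn ρ c (t + 1 + j)).1 (active n hn t) = c t := by
    intro j
    induction j with
    | zero => intro _; simp [seq, apply']
    | succ j ih =>
      intro hj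
      have hne : active n hn t ≠ active n hn (t + 1 + j) := by
        intro h
        have h1 : t ≡ t + (1 + j) [MOD n] := by
          rw [← add_assoc]; exact congrArg Fin.val h
        have h2 : 1 + j ≡ 0 [MOD n] := Nat.ModEq.add_left_cancel' t (by simpa using h1.symm)
        have := Nat.le_of_dvd (by omega) ((Nat.modEq_zero_iff_dvd).1 h2)
        omega
      rw [← add_assoc, seq]
      simp only [apply', Function.update_of_ne hne]
      exact ih (by omega)
  have ha : active n hn (t + n) = active n hn t := Fin.ext (Nat.add_mod_right t n)
  have hs : t + n = t + 1 + (n - 1) := by omega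
  rw [loc, ha, hs, h (n - 1) (by omega)]

/-- `ℤ²` is connected: a property that passes to neighbours and holds somewhere holds
everywhere. -/
lemma forall_of_nbr (S : Z2 → Prop) (h : ∀ v, S v → ∀ u ∈ nbr v, S u) (v : Z2) (hv : S v)
    (w : Z2) : S w := by
  obtain ⟨a, b⟩ := v
  have h1 : ∀ k : ℤ, S (a + k, b) := by
    intro k
    induction k using Int.induction_on with
    | zero => simpa using hv
    | succ i ih => exact h _ ih _ (by simp [nbr, add_assoc])
    | pred i ih => exact h _ ih _ (by simp [nbr, add_sub_assoc])
  have h2 : ∀ x k : ℤ, S (x, b + k) := by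
    intro x k
    induction k using Int.induction_on with
    | zero => simpa using h1 (x - a)
    | succ i ih => exact h _ ih _ (by simp [nbr, add_assoc])
    | pred i ih => exact h _ ih _ (by simp [nbr, add_sub_assoc])
  simpa using h2 w.1 (w.2 - b)

/-- Almost surely, if the neighbourhood of the origin is visited infinitely often, then the walk
is recurrent. -/
lemma ae_recurrent {q : ℝ} (hq : q ∈ Set.Ioc (0 : ℝ) 1) (n : ℕ) (hn : 0 < n) (ρ : Config)
    (μ : Measure Path) [IsProbabilityMeasure μ] (hμ : IsLaw q n hn ρ μ) :
    ∀ᵐ y ∂μ, (y ∈ ⋃ m, fewVisits n hn m) ∨ Recurrent n hn (fun _ => true) y := by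
  have hall : ∀ᵐ y ∂μ, ∀ v, ∀ u ∈ nbr v, (∀ k, ∃ t, k ≤ cnt (fun p _ => p = v) n hn ρ t y) →
      ∀ m, ∃ t, m ≤ cnt (fun p z => p = v ∧ z = u) n hn ρ t y := by
    refine ae_all_iff.2 fun v => ?_
    rw [ae_all_iff]
    intro u
    by_cases hu : u ∈ nbr v
    · filter_upwards [ae_moves hq n hn ρ μ hμ v u hu] with y hy _ using hy
    · exact .of_forall fun y h => absurd h hu
  filter_upwards [hall] with y hy
  refine or_iff_not_imp_left.2 fun hm => ?_
  rw [recurrent_indep n hn _ ρ]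
  simp only [fewVisits, Set.mem_iUnion, Set.mem_ofPred_eq, not_exists, not_forall, not_lt,
    cnt_indep nearMove n hn (fun _ => true) ρ] at hm
  have hnear := (cnt_unbounded_iff nearMove n hn ρ y).1 hm
  have hstep : ∀ v, (∃ᶠ t in atTop, loc n hn ρ y t = v) → ∀ u ∈ nbr v,
      ∃ᶠ t in atTop, loc n hn ρ y t = u := by
    intro v hv u hu
    have h1 := hy v u hu ((cnt_unbounded_iff _ n hn ρ y).2 hv)
    have h2 := frequently_atTop.1 ((cnt_unbounded_iff _ n hn ρ y).1 h1)
    refine frequently_atTop.2 fun a => ?_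
    obtain ⟨t, ht, _, h4⟩ := h2 a
    exact ⟨t + n, by omega, (loc_add n hn ρ y t).trans h4⟩
  -- The neighbourhood of the origin is finite, so one of its vertices is left infinitely often.
  obtain ⟨v, hv⟩ : ∃ v, ∃ᶠ t in atTop, loc n hn ρ y t = v := by
    by_contra! hno
    have h1 : ∀ᶠ t in atTop, ∀ v ∈ box 3, loc n hn ρ y t ≠ v :=
      (Finset.eventually_all _).2 fun v _ => hno v
    obtain ⟨t, ht1, ht2⟩ := (hnear.and_eventually h1).exists
    refine ht2 _ ?_ rfl
    by_contra hb
    have := rr_lt_of_notMem_box hb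
    unfold nearMove at ht1
    norm_num at this
    linarith
  intro w
  rw [← Nat.frequently_atTop_iff_infinite]
  exact (forall_of_nbr (fun v => ∃ᶠ t in atTop, loc n hn ρ y t = v) hstep v hv w).mono
    fun t ht => ⟨_, ht⟩

end HV

/-- **Lemma (lower bound for the mean recurrence probability under IUD labels).**
Let `q ∈ (0,1]` and `n ≥ 1`.  Then for the `n`-walker `H`–`V` walk with parameter `q`,
`E_{ρ∼IUD}[p_rec(ρ)] ≥ 1 − |2q−1|/(nq)`, where the expectation is over the initial
label configuration `ρ` sampled from the IUD measure. -/
theorem hv_mean_recurrence_prob_lower_bound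
    (q : ℝ) (hq : q ∈ Set.Ioc (0 : ℝ) 1) (n : ℕ) (hn : 0 < n)
    (ν : MeasureTheory.Measure HV.Config) [MeasureTheory.IsProbabilityMeasure ν]
    (hν : HV.IsIUD ν)
    (μ : HV.Config → MeasureTheory.Measure HV.Path)
    (hprob : ∀ ρ, MeasureTheory.IsProbabilityMeasure (μ ρ))
    (hμ : ∀ ρ, HV.IsLaw q n hn ρ (μ ρ)) :
    1 - |2 * q - 1| / (n * q) ≤
      ∫ ρ, ((μ ρ) {y | HV.Recurrent n hn ρ y}).toReal ∂ν := by
  have hm := HV.measurable_law hq n hn μ hμ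
  set Rec : Set HV.Path := {y | HV.Recurrent n hn (fun _ => true) y} with hRec
  have hRm : MeasurableSet Rec := HV.measurableSet_recurrent n hn _
  have hrec : ∀ ρ, {y | HV.Recurrent n hn ρ y} = Rec := fun ρ => by
    ext y; exact HV.recurrent_indep n hn _ _ y
  -- `P` is the annealed law of the walk.
  set P : Measure HV.Path := ν.bind μ with hP
  have hPa : ∀ A, MeasurableSet A → P A = ∫⁻ ρ, μ ρ A ∂ν := fun A hA =>
    Measure.bind_apply hA hm.aemeasurable
  have hPR : ∀ A, MeasurableSet A → ∫ ρ, (μ ρ A).toReal ∂ν = (P A).toReal := fun A hA => by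
    rw [hPa A hA]
    exact integral_toReal ((Measure.measurable_coe hA).comp hm).aemeasurable
      (.of_forall fun ρ => measure_lt_top _ _)
  have : IsProbabilityMeasure P := ⟨by rw [hPa _ .univ]; simp⟩
  have hFm := HV.measurableSet_fewVisits n hn
  have hfew : P (⋃ m, HV.fewVisits n hn m) ≤ ENNReal.ofReal (|2 * q - 1| / (n * q)) := by
    have hmono : Monotone (HV.fewVisits n hn) := fun a b hab y hy t => (hy t).trans_le hab
    rw [hmono.measure_iUnion]
    refine iSup_le fun m => ?_
    rw [← ofReal_measureReal]
    refine ENNReal.ofReal_le_ofReal ?_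
    rw [Measure.real, ← hPR _ (hFm m)]
    exact HV.integral_fewVisits_le hq n hn ν hν μ hμ m
  have hle : P Recᶜ ≤ P (⋃ m, HV.fewVisits n hn m) := by
    rw [hPa _ hRm.compl, hPa _ (.iUnion hFm)]
    refine lintegral_mono fun ρ => measure_mono_ae ?_
    filter_upwards [HV.ae_recurrent hq n hn ρ (μ ρ) (hμ ρ)] with y hy hyR
    exact hy.resolve_right hyR
  have hb : 0 ≤ |2 * q - 1| / (n * q) :=
    div_nonneg (abs_nonneg _) (mul_nonneg (Nat.cast_nonneg n) hq.1.le)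
  have h1 : P.real Recᶜ ≤ |2 * q - 1| / (n * q) :=
    ENNReal.toReal_le_of_le_ofReal hb (hle.trans hfew)
  have h2 := measureReal_add_measureReal_compl (μ := P) hRm
  rw [probReal_univ] at h2
  simp only [hrec]
  rw [hPR Rec hRm]
  change _ ≤ P.real Rec
  linarith
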